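/- arXiv:math/0509184 — 4 statements merged into one kernel-verified Lean document; each statement's English description precedes it below -/
import Mathlib

section
/- Let A be a commutative Noetherian local ring, q an ideal, and 0 → M' → M → M'' → 0 a short exact sequence of finitely generated A-modules each of which has finite length quotient by q. Then e_q(M) = e_q(M') + e_q(M'') whenever dim M' = dim M = dim M''; more generally, the Hilbert–Samuel polynomial of M differs from the sum of those of M' and M'' by a polynomial of degree strictly less than dim M. -/
/-!
By exactness, `length (M / q ^ n M) - length (M'' / q ^ n M'')` is the length of
`M' / (M' ∩ q ^ n M)`, and the Artin–Rees lemma gives `k` with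
`q ^ n M' ⊆ M' ∩ q ^ n M ⊆ q ^ (n - k) M'`. Hence, for large `n`,
`0 ≤ P' n - (P n - P'' n) ≤ P' n - P' (n - k)`. The polynomial on the right has degree less than
`r = dim M` as soon as `deg P' ≤ r`, and so does `P - (P' + P'')`, since a polynomial that is
nonnegative and bounded by another one at all large integers has at most its degree
(`degree_le_of_eventually_le`).

To see that `deg P' ≤ r`, note that `P' (n - k) ≤ P n - P'' n ≤ P n`, so it suffices that
`length (M / q ^ n M) ≤ C * n ^ r` (`exists_length_quotient_pow_smul_le`). Choose parameters
`a₁, …, aᵣ` for `M` (`exists_parameters`, from the converse of Krull's height theorem) and `k'` with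
`m ^ k' M ⊆ q M`, where `m` is the maximal ideal. Then `q ^ n M` contains `∑ aᵢ ^ (k' n) M`, and
killing powers of the `aᵢ` one at a time gives
`length (M / ∑ aᵢ ^ t M) ≤ t ^ r * length (M / ∑ aᵢ M)` (`length_quotient_finset_pow_smul_le`).
If `q` is proper, the last length is finite because `∑ aᵢ M` contains `q ^ n M` for large `n`;
if `q = A`, all the lengths `length (M / q ^ n M)` vanish.
-/

/-- The length of a module, as the Krull dimension of its lattice of submodules. -/
noncomputable def mLength (R : Type*) [CommRing R] (M : Type*) [AddCommGroup M] [Module R M] :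
    WithBot ℕ∞ :=
  Order.krullDim (Submodule R M)

/-- The (Krull) dimension of a module `M` over `R`, i.e. `dim (R / Ann M)`. -/
noncomputable def mDim (R : Type*) [CommRing R] (M : Type*) [AddCommGroup M] [Module R M] :
    WithBot ℕ∞ :=
  ringKrullDim (R ⧸ Module.annihilator R M)

/-- The length of the localization `M_p` over the local ring `R_p`. -/
noncomputable def locLen (R : Type*) [CommRing R] (M : Type*) [AddCommGroup M] [Module R M]
    (p : PrimeSpectrum R) : WithBot ℕ∞ :=
  mLength (Localization p.asIdeal.primeCompl) (LocalizedModule p.asIdeal.primeCompl M)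

/-- The `n`-th value of the Hilbert–Samuel function of the ideal `q` on `M`:
the length of `M / q^n M`. -/
noncomputable def hsVal (R : Type*) [CommRing R] (q : Ideal R) (M : Type*) [AddCommGroup M]
    [Module R M] (n : ℕ) : WithBot ℕ∞ :=
  mLength R (M ⧸ (q ^ n • ⊤ : Submodule R M))

/-- `P` is a Hilbert–Samuel polynomial of `(q, M)`: for all large `n`,
`length (M / q^n M)` is finite and equal to `P.eval n`. -/
def IsHSPoly (R : Type*) [CommRing R] (q : Ideal R) (M : Type*) [AddCommGroup M] [Module R M]
    (P : Polynomial ℚ) : Prop :=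
  ∃ N : ℕ, ∀ n ≥ N, ∃ c : ℕ, hsVal R q M n = (c : ℕ∞) ∧ (c : ℚ) = P.eval (n : ℚ)

/-! ### Length of quotients by powers of elements -/

/-- Right exactness makes length subadditive. -/
lemma length_le_add_of_exact {R : Type*} [CommRing R] {N M Q : Type*}
    [AddCommGroup N] [AddCommGroup M] [AddCommGroup Q] [Module R N] [Module R M] [Module R Q]
    (u : N →ₗ[R] M) (v : M →ₗ[R] Q) (hv : Function.Surjective v)
    (huv : Function.Exact u v) :
    Module.length R M ≤ Module.length R N + Module.length R Q := by
  have hex : Function.Exact (LinearMap.range u).subtype v := by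
    rw [LinearMap.exact_iff] at huv ⊢
    simpa using huv
  rw [Module.length_eq_add_of_exact _ v (Submodule.subtype_injective _) hv hex]
  gcongr
  exact Module.length_le_of_surjective u.rangeRestrict u.surjective_rangeRestrict

lemma length_quotient_antitone {R : Type*} [CommRing R] {M : Type*} [AddCommGroup M] [Module R M]
    {N K : Submodule R M} (h : N ≤ K) :
    Module.length R (M ⧸ K) ≤ Module.length R (M ⧸ N) :=
  Module.length_le_of_surjective (Submodule.factor h) (Submodule.factor_surjective h)

open Pointwise in
/-- The right exact sequence `M/(N + x^n M) → M/(N + x^(n+1) M) → M/(N + x M) → 0`, whose first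
map is multiplication by `x`, bounds the length of `M/(N + x^n M)` by induction on `n`. -/
lemma length_quotient_sup_pow_smul_le {R : Type*} [CommRing R] {M : Type*} [AddCommGroup M]
    [Module R M] (N : Submodule R M) (x : R) (n : ℕ) :
    Module.length R (M ⧸ (N ⊔ x ^ n • (⊤ : Submodule R M))) ≤
      n * Module.length R (M ⧸ (N ⊔ x • (⊤ : Submodule R M))) := by
  induction n with
  | zero =>
    have : Subsingleton (M ⧸ (N ⊔ x ^ 0 • (⊤ : Submodule R M))) := by
      rw [Submodule.Quotient.subsingleton_iff]; simp
    simp [Module.length_eq_zero]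
  | succ n ih =>
    have h1 : N ⊔ x ^ n • (⊤ : Submodule R M) ≤
        (N ⊔ x ^ (n + 1) • (⊤ : Submodule R M)).comap (LinearMap.lsmul R M x) := by
      refine sup_le (fun y hy => ?_) (fun y hy => ?_)
      · exact Submodule.mem_sup_left (N.smul_mem x hy)
      · obtain ⟨z, -, rfl⟩ := (Submodule.mem_smul_pointwise_iff_exists _ _ _).1 hy
        refine Submodule.mem_sup_right ?_
        refine (Submodule.mem_smul_pointwise_iff_exists _ _ _).2 ⟨z, trivial, ?_⟩
        simp only [LinearMap.lsmul_apply, pow_succ', mul_smul]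
    have h2 : N ⊔ x ^ (n + 1) • (⊤ : Submodule R M) ≤ N ⊔ x • (⊤ : Submodule R M) := by
      refine sup_le_sup_left (fun y hy => ?_) _
      obtain ⟨z, -, rfl⟩ := (Submodule.mem_smul_pointwise_iff_exists _ _ _).1 hy
      exact (Submodule.mem_smul_pointwise_iff_exists _ _ _).2
        ⟨x ^ n • z, trivial, by rw [pow_succ', mul_smul]⟩
    have hex : Function.Exact (Submodule.mapQ _ _ (LinearMap.lsmul R M x) h1)
        (Submodule.factor h2) := by
      intro y
      obtain ⟨y, rfl⟩ := Submodule.mkQ_surjective _ y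
      constructor
      · intro hy
        have hy' : y ∈ N ⊔ x • (⊤ : Submodule R M) := by simpa using hy
        obtain ⟨a, ha, b, hb, rfl⟩ := Submodule.mem_sup.1 hy'
        obtain ⟨z, -, rfl⟩ := (Submodule.mem_smul_pointwise_iff_exists _ _ _).1 hb
        refine ⟨Submodule.mkQ _ z, ?_⟩
        simp only [Submodule.mkQ_apply, Submodule.mapQ_apply, LinearMap.lsmul_apply]
        rw [Submodule.Quotient.eq]
        refine Submodule.mem_sup_left ?_
        simpa using ha
      · rintro ⟨z, hz⟩
        obtain ⟨z, rfl⟩ := Submodule.mkQ_surjective _ z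
        rw [← hz]
        simp only [Submodule.mkQ_apply, Submodule.mapQ_apply, LinearMap.lsmul_apply,
          Submodule.Quotient.mk_eq_zero]
        exact Submodule.mem_sup_right
          ((Submodule.mem_smul_pointwise_iff_exists _ _ _).2 ⟨z, trivial, rfl⟩)
    refine (length_le_add_of_exact _ _ (Submodule.factor_surjective h2) hex).trans ?_
    rw [Nat.cast_succ, add_mul, one_mul]
    gcongr

open Pointwise in
/-- Replacing the `r` elements `a i` by their `n`-th powers multiplies the length of the quotient by
at most `n ^ r`; the submodule `N` is carried along for the induction on `r`. -/
lemma length_quotient_finset_pow_smul_le {R : Type*} [CommRing R] {M : Type*} [AddCommGroup M]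
    [Module R M] {ι : Type*} (s : Finset ι) (a : ι → R) (n : ℕ) (N : Submodule R M) :
    Module.length R (M ⧸ (N ⊔ s.sup fun i => a i ^ n • (⊤ : Submodule R M))) ≤
      (n ^ s.card : ℕ) *
        Module.length R (M ⧸ (N ⊔ s.sup fun i => a i • (⊤ : Submodule R M))) := by
  classical
  induction s using Finset.induction_on generalizing N with
  | empty =>
    rw [Finset.card_empty, pow_zero, Nat.cast_one, one_mul]
    exact le_rfl
  | insert i s hi ih =>
    rw [Finset.sup_insert, Finset.sup_insert, Finset.card_insert_of_notMem hi, ← sup_assoc]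
    refine (ih _).trans ?_
    rw [sup_right_comm, sup_comm (a i • ⊤), ← sup_assoc, pow_succ, Nat.cast_mul, mul_assoc]
    gcongr
    exact length_quotient_sup_pow_smul_le _ _ _

/-! ### Polynomial growth of degree at most the dimension -/

/-- If `M / qM` has finite length then a power of the maximal ideal maps `M` into `qM`: the powers
of the maximal ideal stabilize on `M / qM`, and their stable value vanishes by Nakayama. -/
lemma exists_maximalIdeal_pow_smul_top_le {A : Type*} [CommRing A]
    [IsLocalRing A] {M : Type*} [AddCommGroup M] [Module A M]
    (q : Ideal A) (hq : IsFiniteLength A (M ⧸ (q • ⊤ : Submodule A M))) :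
    ∃ k : ℕ, IsLocalRing.maximalIdeal A ^ k • (⊤ : Submodule A M) ≤ q • ⊤ := by
  set m := IsLocalRing.maximalIdeal A
  obtain ⟨hN, hA⟩ := isFiniteLength_iff_isNoetherian_isArtinian.1 hq
  set Q := M ⧸ (q • ⊤ : Submodule A M)
  let F : ℕ →o (Submodule A Q)ᵒᵈ :=
    ⟨fun i => OrderDual.toDual (m ^ i • ⊤), fun i j hij =>
      OrderDual.toDual_le_toDual.2 (Submodule.smul_mono_left (Ideal.pow_le_pow_right hij))⟩
  obtain ⟨k, hk⟩ := IsArtinian.monotone_stabilizes F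
  have hk' : m ^ k • (⊤ : Submodule A Q) = m ^ (k + 1) • ⊤ := hk (k + 1) (Nat.le_succ k)
  have hbot : m ^ k • (⊤ : Submodule A Q) = ⊥ := by
    refine Submodule.eq_bot_of_le_smul_of_le_jacobson_bot m _ (IsNoetherian.noetherian _) ?_
      (IsLocalRing.maximalIdeal_le_jacobson _)
    conv_lhs => rw [hk']
    rw [pow_succ', mul_smul]
  refine ⟨k, ?_⟩
  have := congrArg (Submodule.comap (q • ⊤ : Submodule A M).mkQ) hbot
  rw [Submodule.comap_bot, Submodule.ker_mkQ] at this
  rw [← this, ← Submodule.map_le_iff_le_comap, Submodule.map_smul'']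
  exact smul_mono_right _ le_top

open Pointwise in
/-- A module of dimension `r` over a Noetherian local ring has a system of parameters: `r` elements
`a i` of the maximal ideal `m` such that `∑ a i M` contains `m ^ j M` for some `j`. They are lifts
of elements `i` of `A / Ann M` generating an ideal over which its maximal ideal is minimal. -/
lemma exists_parameters {A : Type*} [CommRing A] [IsNoetherianRing A]
    [IsLocalRing A] {M : Type*} [AddCommGroup M] [Module A M] (r : ℕ)
    (hr : mDim A M = (r : ℕ∞)) :
    ∃ (s : Finset (A ⧸ Module.annihilator A M)) (a : (A ⧸ Module.annihilator A M) → A) (j : ℕ),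
      s.card = r ∧ (∀ i ∈ s, a i ∈ IsLocalRing.maximalIdeal A) ∧
      IsLocalRing.maximalIdeal A ^ j • (⊤ : Submodule A M) ≤
        s.sup fun i => a i • (⊤ : Submodule A M) := by
  set I := Module.annihilator A M with hI
  unfold mDim at hr
  have hnt : Nontrivial (A ⧸ I) := by
    by_contra h
    rw [not_nontrivial_iff_subsingleton] at h
    rw [ringKrullDim_eq_bot_of_subsingleton] at hr
    exact absurd hr (by simp)
  have : IsLocalRing (A ⧸ I) := IsLocalRing.of_surjective' _ Ideal.Quotient.mk_surjective
  obtain ⟨s, hs, hcard⟩ := Ideal.exists_finset_card_eq_height_of_isNoetherianRing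
    (IsLocalRing.maximalIdeal (A ⧸ I))
  have hcard' : s.card = r := by
    have h1 := IsLocalRing.maximalIdeal_height_eq_ringKrullDim (R := A ⧸ I)
    rw [hr, ← hcard] at h1
    exact_mod_cast h1
  obtain ⟨a, ha⟩ := (Ideal.Quotient.mk_surjective (I := I)).hasRightInverse
  have hrad : IsLocalRing.maximalIdeal (A ⧸ I) ≤ (Ideal.span (s : Set (A ⧸ I))).radical := by
    rw [Ideal.radical_eq_sInf]
    refine le_sInf fun p ⟨hp1, hp2⟩ => ?_
    exact hs.2 ⟨hp2, hp1⟩ (IsLocalRing.le_maximalIdeal hp2.ne_top)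
  obtain ⟨j, hj⟩ := Ideal.exists_radical_pow_le_of_fg (Ideal.span (s : Set (A ⧸ I)))
    (IsNoetherian.noetherian _)
  have hmap : (IsLocalRing.maximalIdeal A).map (Ideal.Quotient.mk I) ≤
      IsLocalRing.maximalIdeal (A ⧸ I) := by
    refine IsLocalRing.le_maximalIdeal ?_
    intro htop
    have h2 : IsLocalRing.maximalIdeal A = ⊤ := by
      rw [eq_top_iff, ← Ideal.comap_top (f := Ideal.Quotient.mk I), ← htop,
        Ideal.comap_map_of_surjective _ Ideal.Quotient.mk_surjective, ← RingHom.ker_eq_comap_bot,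
        Ideal.mk_ker]
      exact sup_le le_rfl (IsLocalRing.le_maximalIdeal (Ideal.Quotient.nontrivial_iff.1 hnt))
    exact (IsLocalRing.maximalIdeal.isMaximal A).ne_top h2
  refine ⟨s, a, j, hcard', fun i hi => ?_, ?_⟩
  · by_contra hu
    have hu' : IsUnit (a i) := by simpa using hu
    have h3 := hu'.map (Ideal.Quotient.mk I)
    rw [ha i] at h3
    exact (IsLocalRing.mem_maximalIdeal _).1 (hs.1.2 (Ideal.subset_span hi)) h3
  · have hle : IsLocalRing.maximalIdeal A ^ j ≤ Ideal.span (a '' s) ⊔ I := by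
      have h4 : Ideal.span (s : Set (A ⧸ I)) =
          (Ideal.span (a '' s)).map (Ideal.Quotient.mk I) := by
        rw [Ideal.map_span, ← Set.image_comp]
        congr 1
        have : (Ideal.Quotient.mk I) ∘ a = id := funext ha
        rw [this, Set.image_id]
      have h5 : Ideal.span (a '' s) ⊔ I =
          (Ideal.span (s : Set (A ⧸ I))).comap (Ideal.Quotient.mk I) := by
        rw [h4, Ideal.comap_map_of_surjective _ Ideal.Quotient.mk_surjective,
          ← RingHom.ker_eq_comap_bot, Ideal.mk_ker]
      rw [h5, ← Ideal.map_le_iff_le_comap, Ideal.map_pow]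
      exact (Ideal.pow_right_mono (hmap.trans hrad) j).trans hj
    refine (Submodule.smul_mono_left hle).trans ?_
    rw [Submodule.sup_smul]
    refine sup_le ?_ ?_
    · rw [Submodule.span_smul_eq, Submodule.set_smul_le_iff]
      rintro _ y ⟨i, hi, rfl⟩ -
      exact Finset.le_sup (f := fun i => a i • (⊤ : Submodule A M)) hi
        (Submodule.smul_mem_pointwise_smul y (a i) ⊤ trivial)
    · refine le_of_eq_of_le ?_ bot_le
      rw [eq_bot_iff, Submodule.smul_le]
      intro b hb y _
      exact (Submodule.mem_bot A).2 (Module.mem_annihilator.1 hb y)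

open Pointwise in
/-- The length of `M / q ^ n M` grows at most like `n ^ dim M`. -/
lemma exists_length_quotient_pow_smul_le {A : Type*} [CommRing A] [IsNoetherianRing A]
    [IsLocalRing A] {M : Type*} [AddCommGroup M] [Module A M]
    (q : Ideal A) (hq : IsFiniteLength A (M ⧸ (q • ⊤ : Submodule A M))) (r : ℕ)
    (hr : mDim A M = (r : ℕ∞))
    (hfin : ∃ N : ℕ, ∀ n ≥ N, Module.length A (M ⧸ (q ^ n • ⊤ : Submodule A M)) ≠ ⊤) :
    ∃ C : ℕ, ∀ n, Module.length A (M ⧸ (q ^ n • ⊤ : Submodule A M)) ≤ (C * n ^ r : ℕ) := by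
  by_cases hqt : q = ⊤
  · refine ⟨0, fun n => ?_⟩
    have : Subsingleton (M ⧸ (q ^ n • ⊤ : Submodule A M)) := by
      rw [Submodule.Quotient.subsingleton_iff, hqt, ← Ideal.one_eq_top, one_pow,
        one_smul]
    simp [Module.length_eq_zero]
  have hqm := IsLocalRing.le_maximalIdeal hqt
  obtain ⟨k, hk⟩ := exists_maximalIdeal_pow_smul_top_le q hq
  obtain ⟨s, a, j, hs, ha, hj⟩ := exists_parameters (M := M) r hr
  obtain ⟨N, hN⟩ := hfin
  -- `∑ a i M` contains `m ^ j M`, hence `q ^ n M` for large `n`.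
  have hfinpar : Module.length A (M ⧸ (s.sup fun i => a i • (⊤ : Submodule A M))) ≠ ⊤ := by
    refine ne_top_of_le_ne_top (hN (max N j) (le_max_left _ _)) (length_quotient_antitone ?_)
    refine le_trans (Submodule.smul_mono_left ?_) hj
    exact (Ideal.pow_le_pow_right (le_max_right _ _)).trans (Ideal.pow_right_mono hqm j)
  obtain ⟨c, hc⟩ := ENat.ne_top_iff_exists.1 hfinpar
  have hpow : ∀ n, (IsLocalRing.maximalIdeal A ^ k) ^ n • (⊤ : Submodule A M) ≤ q ^ n • ⊤ := by
    intro n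
    induction n with
    | zero => simp
    | succ n ih =>
      calc (IsLocalRing.maximalIdeal A ^ k) ^ (n + 1) • (⊤ : Submodule A M)
          = (IsLocalRing.maximalIdeal A ^ k) ^ n •
              (IsLocalRing.maximalIdeal A ^ k • (⊤ : Submodule A M)) := by rw [pow_succ, mul_smul]
        _ ≤ (IsLocalRing.maximalIdeal A ^ k) ^ n • (q • (⊤ : Submodule A M)) :=
            smul_mono_right _ hk
        _ = q • ((IsLocalRing.maximalIdeal A ^ k) ^ n • (⊤ : Submodule A M)) := by
            rw [← mul_smul, mul_comm, mul_smul]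
        _ ≤ q • (q ^ n • (⊤ : Submodule A M)) := smul_mono_right _ ih
        _ = q ^ (n + 1) • ⊤ := by rw [← mul_smul, pow_succ']
  refine ⟨k ^ r * c, fun n => ?_⟩
  have h1 := length_quotient_finset_pow_smul_le s a (k * n) (⊥ : Submodule A M)
  rw [bot_sup_eq, bot_sup_eq, ← hc, hs] at h1
  refine (length_quotient_antitone ?_).trans (h1.trans (le_of_eq ?_))
  · refine le_trans (Finset.sup_le fun i hi => ?_) (hpow n)
    intro y hy
    obtain ⟨z, -, rfl⟩ := (Submodule.mem_smul_pointwise_iff_exists _ _ _).1 hy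
    rw [← pow_mul]
    exact Submodule.smul_mem_smul (Ideal.pow_mem_pow (ha i hi) _) trivial
  · rw [← Nat.cast_mul]
    congr 1
    ring

/-! ### Exact sequences and the Artin–Rees lemma -/

/-- The exact sequence `0 → M' / f⁻¹ N → M / N → M'' / g N → 0`. -/
lemma length_quotient_eq_add {A : Type*} [CommRing A] {M' M M'' : Type*} [AddCommGroup M']
    [Module A M'] [AddCommGroup M] [Module A M] [AddCommGroup M''] [Module A M'']
    (f : M' →ₗ[A] M) (g : M →ₗ[A] M'') (hg : Function.Surjective g) (hfg : Function.Exact f g)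
    (N : Submodule A M) :
    Module.length A (M ⧸ N) =
      Module.length A (M' ⧸ N.comap f) + Module.length A (M'' ⧸ N.map g) := by
  refine Module.length_eq_add_of_exact (Submodule.mapQ (N.comap f) N f le_rfl)
    (Submodule.mapQ N (N.map g) g (Submodule.le_comap_map g N)) ?_ ?_ ?_
  · rw [injective_iff_map_eq_zero]
    intro x hx
    obtain ⟨x, rfl⟩ := Submodule.mkQ_surjective _ x
    simpa using hx
  · intro y
    obtain ⟨y, rfl⟩ := Submodule.mkQ_surjective _ y
    obtain ⟨x, rfl⟩ := hg y
    exact ⟨Submodule.mkQ _ x, by simp⟩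
  · intro y
    obtain ⟨y, rfl⟩ := Submodule.mkQ_surjective _ y
    constructor
    · intro hy
      have hy' : g y ∈ N.map g := by
        simpa only [Submodule.mkQ_apply, Submodule.mapQ_apply,
          Submodule.Quotient.mk_eq_zero] using hy
      obtain ⟨n, hn, hny⟩ := hy'
      obtain ⟨x, hx⟩ := (hfg (y - n)).1 (by rw [map_sub, hny, sub_self])
      refine ⟨Submodule.mkQ _ x, ?_⟩
      simp only [Submodule.mkQ_apply, Submodule.mapQ_apply]
      rw [Submodule.Quotient.eq, hx]
      simpa using hn
    · rintro ⟨x, hx⟩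
      obtain ⟨x, rfl⟩ := Submodule.mkQ_surjective _ x
      rw [← hx]
      simp [hfg.apply_apply_eq_zero]

/-- The Artin–Rees lemma, for an injection `f` in place of a submodule. -/
lemma exists_comap_pow_smul_le {A : Type*} [CommRing A] [IsNoetherianRing A] {M' M : Type*}
    [AddCommGroup M'] [Module A M'] [AddCommGroup M] [Module A M] [Module.Finite A M]
    (f : M' →ₗ[A] M) (hf : Function.Injective f) (q : Ideal A) :
    ∃ k : ℕ, ∀ n ≥ k, (q ^ n • (⊤ : Submodule A M)).comap f ≤ q ^ (n - k) • ⊤ := by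
  obtain ⟨k, hk⟩ := q.exists_pow_inf_eq_pow_smul (LinearMap.range f)
  refine ⟨k, fun n hn x hx => ?_⟩
  have h1 : f x ∈ q ^ (n - k) • LinearMap.range f := by
    have h2 : f x ∈ q ^ n • (⊤ : Submodule A M) ⊓ LinearMap.range f := ⟨hx, x, rfl⟩
    rw [hk n hn] at h2
    exact (smul_mono_right (q ^ (n - k)) inf_le_right : _ ≤ q ^ (n - k) • LinearMap.range f) h2
  rw [← Submodule.map_top, ← Submodule.map_smul''] at h1
  obtain ⟨y, hy, hyx⟩ := h1
  rwa [← hf hyx]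

/-! ### Degrees of polynomials from their values at large integers -/

/-- Comparison of growth along the natural numbers bounds the degree: otherwise
`Q / P` tends to `0` along `ℕ`, although it is at least `1` wherever `0 < P ≤ Q`. -/
lemma degree_le_of_eventually_le (P Q : Polynomial ℚ)
    (h : ∃ N : ℕ, ∀ n : ℕ, N ≤ n → 0 ≤ P.eval (n : ℚ) ∧ P.eval (n : ℚ) ≤ Q.eval (n : ℚ)) :
    P.degree ≤ Q.degree := by
  by_contra! hlt
  obtain ⟨N, hN⟩ := h
  have hP0 : P ≠ 0 := by rintro rfl; simp at hlt
  have hlim := (Polynomial.div_tendsto_atTop_zero_of_degree_lt Q P hlt).comp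
    (tendsto_natCast_atTop_atTop (R := ℚ))
  have hroot : ∀ᶠ n : ℕ in Filter.atTop, P.eval (n : ℚ) ≠ 0 :=
    (tendsto_natCast_atTop_atTop (R := ℚ)).eventually
      (Polynomial.eventually_atTop_not_isRoot P hP0)
  have hlt1 := hlim.eventually_lt_const (zero_lt_one' ℚ)
  obtain ⟨n, h1, h2, h3⟩ := (hlt1.and (hroot.and (Filter.eventually_ge_atTop N))).exists
  obtain ⟨h4, h5⟩ := hN n h3
  have hpos : 0 < P.eval (n : ℚ) := lt_of_le_of_ne h4 (Ne.symm h2)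
  simp only [Function.comp_apply] at h1
  rw [div_lt_one hpos] at h1
  exact absurd h5 (not_le.2 h1)

/-- A polynomial and its translate have the same leading term. -/
lemma degree_sub_taylor_lt (P : Polynomial ℚ) (c : ℚ) (r : ℕ) (h : P.degree ≤ r) :
    (P - Polynomial.taylor c P).degree < r := by
  by_cases hP : P = 0
  · subst hP
    simp
  · exact (Polynomial.degree_sub_lt_left (Polynomial.degree_taylor P c).symm hP
      (Polynomial.leadingCoeff_taylor (r := c) (f := P)).symm).trans_le h

/-- The defining property of a Hilbert–Samuel polynomial, in terms of `Module.length`. -/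
lemma IsHSPoly.exists_length {R : Type*} [CommRing R] {q : Ideal R} {M : Type*} [AddCommGroup M]
    [Module R M] {P : Polynomial ℚ} (h : IsHSPoly R q M P) :
    ∃ N : ℕ, ∀ n ≥ N, ∃ c : ℕ, Module.length R (M ⧸ (q ^ n • ⊤ : Submodule R M)) = c ∧
      (c : ℚ) = P.eval (n : ℚ) := by
  obtain ⟨N, hN⟩ := h
  refine ⟨N, fun n hn => ?_⟩
  obtain ⟨c, h1, h2⟩ := hN n hn
  refine ⟨c, ?_, h2⟩
  unfold hsVal mLength at h1
  rw [← Module.coe_length] at h1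
  exact_mod_cast h1

/-! ### Additivity -/

/-- Additivity of Hilbert–Samuel polynomials and multiplicities in a short exact sequence
`0 → M' → M → M'' → 0`: the Hilbert–Samuel polynomial of `M` differs from the sum of those
of `M'` and `M''` by a polynomial of degree strictly less than `dim M`; in particular if
`dim M' = dim M = dim M'' = r` then the degree-`r` coefficients (and hence the
multiplicities `e_q = r! ·` leading coefficient) add up. -/
theorem stmt5 (A : Type*) [CommRing A] [IsNoetherianRing A] [IsLocalRing A]
    (M' M M'' : Type*) [AddCommGroup M'] [Module A M'] [AddCommGroup M] [Module A M]
    [AddCommGroup M''] [Module A M'']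
    [Module.Finite A M'] [Module.Finite A M] [Module.Finite A M'']
    (f : M' →ₗ[A] M) (g : M →ₗ[A] M'')
    (hf : Function.Injective f) (hg : Function.Surjective g) (hfg : Function.Exact f g)
    (q : Ideal A)
    (hq' : IsFiniteLength A (M' ⧸ (q • ⊤ : Submodule A M')))
    (hq : IsFiniteLength A (M ⧸ (q • ⊤ : Submodule A M)))
    (hq'' : IsFiniteLength A (M'' ⧸ (q • ⊤ : Submodule A M'')))
    (P' P P'' : Polynomial ℚ)
    (hP' : IsHSPoly A q M' P') (hP : IsHSPoly A q M P) (hP'' : IsHSPoly A q M'' P'') :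
    (∀ r : ℕ, mDim A M = (r : ℕ∞) → (P - (P' + P'')).degree < (r : ℕ)) ∧
    (∀ r : ℕ, mDim A M' = (r : ℕ∞) → mDim A M = (r : ℕ∞) → mDim A M'' = (r : ℕ∞) →
      P.coeff r = P'.coeff r + P''.coeff r) := by
  suffices key : ∀ r : ℕ, mDim A M = (r : ℕ∞) → (P - (P' + P'')).degree < (r : ℕ) by
    refine ⟨key, fun r _ hr _ => ?_⟩
    have := Polynomial.coeff_eq_zero_of_degree_lt (key r hr)
    rw [Polynomial.coeff_sub, Polynomial.coeff_add] at this
    linarith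
  intro r hr
  obtain ⟨N', hN'⟩ := hP'.exists_length
  obtain ⟨N, hN⟩ := hP.exists_length
  obtain ⟨N'', hN''⟩ := hP''.exists_length
  obtain ⟨C, hC⟩ := exists_length_quotient_pow_smul_le q hq r hr
    ⟨N, fun n hn => by
      obtain ⟨c, hc, -⟩ := hN n hn
      rw [hc]
      exact ENat.natCast_ne_top c⟩
  obtain ⟨k, hk⟩ := exists_comap_pow_smul_le f hf q
  -- `P - P''` counts the length of `M' / (M' ∩ q ^ n M)`, squeezed between `q ^ n` and
  -- `q ^ (n - k)` by Artin–Rees.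
  have main : ∀ n : ℕ, N + N' + N'' + k ≤ n →
      0 ≤ P'.eval ((n : ℚ) - k) ∧ P'.eval ((n : ℚ) - k) ≤ (P - P'').eval (n : ℚ) ∧
      (P - P'').eval (n : ℚ) ≤ P'.eval (n : ℚ) ∧ (P - P'').eval (n : ℚ) ≤ C * (n : ℚ) ^ r := by
    intro n hn
    obtain ⟨c, hc, hcP⟩ := hN n (by omega)
    obtain ⟨c', hc', hcP'⟩ := hN' n (by omega)
    obtain ⟨d', hd', hdP'⟩ := hN' (n - k) (by omega)
    obtain ⟨c'', hc'', hcP''⟩ := hN'' n (by omega)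
    rw [Nat.cast_sub (by omega : k ≤ n)] at hdP'
    have hadd := length_quotient_eq_add f g hg hfg (q ^ n • ⊤)
    rw [Submodule.map_smul'', Submodule.map_top, LinearMap.range_eq_top.2 hg, hc, hc''] at hadd
    have hne : Module.length A (M' ⧸ (q ^ n • (⊤ : Submodule A M)).comap f) ≠ ⊤ := by
      intro htop
      rw [htop, top_add] at hadd
      exact ENat.natCast_ne_top c hadd
    obtain ⟨h, hh⟩ := ENat.ne_top_iff_exists.1 hne
    have hlow := length_quotient_antitone (hk n (by omega))
    have hupp := length_quotient_antitone (N := q ^ n • (⊤ : Submodule A M'))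
      (K := (q ^ n • (⊤ : Submodule A M)).comap f) (by
        rw [← Submodule.map_le_iff_le_comap, Submodule.map_smul'']
        exact smul_mono_right _ le_top)
    have hCn := hC n
    rw [← hh] at hadd hlow hupp
    rw [hd'] at hlow
    rw [hc'] at hupp
    rw [hc] at hCn
    have e1 : c = h + c'' := by exact_mod_cast hadd
    have e2 : d' ≤ h := by exact_mod_cast hlow
    have e3 : h ≤ c' := by exact_mod_cast hupp
    have e4 : c ≤ C * n ^ r := by exact_mod_cast hCn
    have e5 : (P - P'').eval (n : ℚ) = h := by
      rw [Polynomial.eval_sub, ← hcP, ← hcP'', e1]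
      push_cast
      ring
    rw [e5, ← hdP', ← hcP']
    refine ⟨by positivity, by exact_mod_cast e2, by exact_mod_cast e3, ?_⟩
    have : h ≤ C * n ^ r := by omega
    exact_mod_cast this
  have heval : ∀ x : ℚ, (Polynomial.taylor (-(k : ℚ)) P').eval x = P'.eval (x - k) := by
    intro x
    rw [Polynomial.taylor_eval, sub_eq_add_neg]
  have hdeg : P'.degree ≤ r := by
    rw [← Polynomial.degree_taylor P' (-(k : ℚ))]
    refine (degree_le_of_eventually_le _ (Polynomial.C (C : ℚ) * Polynomial.X ^ r)
      ⟨N + N' + N'' + k, fun n hn => ?_⟩).trans (Polynomial.degree_C_mul_X_pow_le r _)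
    obtain ⟨h1, h2, -, h4⟩ := main n hn
    rw [heval]
    refine ⟨h1, (h2.trans h4).trans (le_of_eq ?_)⟩
    simp
  rw [← Polynomial.degree_neg]
  refine (degree_le_of_eventually_le _ (P' - Polynomial.taylor (-(k : ℚ)) P')
    ⟨N + N' + N'' + k, fun n hn => ?_⟩).trans_lt (degree_sub_taylor_lt P' _ r hdeg)
  obtain ⟨-, h2, h3, -⟩ := main n hn
  simp only [Polynomial.eval_neg, Polynomial.eval_sub, Polynomial.eval_add, heval] at h2 h3 ⊢
  constructor <;> linarith
end

section
/- Let A be a commutative Noetherian local ring, M a finitely generated A-module of dimension r, and q an ideal with M/qM of finite length. Then e_q(M) = Σ_p length_{A_p}(M_p) · e_q(A/p), where the sum runs over the minimal primes p of Supp(M) with dim(A/p) = r. -/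
universe u v

open Filter Topology

/-! ### The Hilbert-Samuel function and exact sequences -/

/-- The Hilbert-Samuel function of `q` on `N`, with values in `ℕ∞`. -/
noncomputable def hs {A : Type u} [CommRing A] (q : Ideal A) (N : Type v) [AddCommGroup N]
    [Module A N] (n : ℕ) : ℕ∞ :=
  Module.length A (N ⧸ (q ^ n • ⊤ : Submodule A N))

theorem hsVal_eq_hs {A : Type u} [CommRing A] (q : Ideal A) (N : Type v) [AddCommGroup N]
    [Module A N] (n : ℕ) : hsVal A q N n = (hs q N n : WithBot ℕ∞) :=
  (Module.coe_length _ _).symm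

theorem hs_congr {A : Type u} [CommRing A] (q : Ideal A) {N : Type v} [AddCommGroup N]
    [Module A N] {N' : Type*} [AddCommGroup N'] [Module A N'] (e : N ≃ₗ[A] N') (n : ℕ) :
    hs q N n = hs q N' n := by
  refine (Submodule.Quotient.equiv _ _ e ?_).length_eq
  rw [Submodule.map_smul'']
  simp

/-- An exact sequence `N₁ → N₂ → N₃ → 0` and a submodule `U` of `N₂` induce a short exact sequence
on the quotients by `U` and by its preimage and image; `f` need not be injective. -/
theorem length_quotient_exact {A : Type u} [CommRing A] {N₁ N₂ N₃ : Type*}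
    [AddCommGroup N₁] [Module A N₁] [AddCommGroup N₂] [Module A N₂] [AddCommGroup N₃] [Module A N₃]
    (f : N₁ →ₗ[A] N₂) (g : N₂ →ₗ[A] N₃) (hg : Function.Surjective g) (h : Function.Exact f g)
    (U : Submodule A N₂) :
    Module.length A (N₂ ⧸ U) =
      Module.length A (N₁ ⧸ U.comap f) + Module.length A (N₃ ⧸ U.map g) := by
  refine Module.length_eq_add_of_exact (Submodule.mapQ (U.comap f) U f le_rfl)
    (Submodule.mapQ U (U.map g) g (Submodule.le_comap_map _ _)) ?_ ?_ ?_
  · rw [← LinearMap.ker_eq_bot, Submodule.ker_mapQ]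
    simp
  · rw [← LinearMap.range_eq_top, Submodule.range_mapQ, LinearMap.range_eq_top.2 hg]
    simp
  · intro y
    obtain ⟨y, rfl⟩ := U.mkQ_surjective y
    simp only [Submodule.mkQ_apply, Submodule.mapQ_apply, Submodule.Quotient.mk_eq_zero,
      Submodule.mem_map, Set.mem_range]
    constructor
    · rintro ⟨u, hu, hug⟩
      obtain ⟨x, hx⟩ := (h (y - u)).1 (by simp [hug])
      refine ⟨Submodule.Quotient.mk x, ?_⟩
      rw [Submodule.mapQ_apply, hx, Submodule.Quotient.eq]
      simpa using hu
    · rintro ⟨x, hx⟩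
      obtain ⟨x, rfl⟩ := Submodule.mkQ_surjective _ x
      rw [Submodule.mkQ_apply, Submodule.mapQ_apply, Submodule.Quotient.eq] at hx
      refine ⟨y - f x, ?_, by simp [h.apply_apply_eq_zero]⟩
      simpa using U.neg_mem hx

theorem length_quotient_anti {A : Type u} [CommRing A] {N : Type*}
    [AddCommGroup N] [Module A N] {U V : Submodule A N} (h : U ≤ V) :
    Module.length A (N ⧸ V) ≤ Module.length A (N ⧸ U) :=
  Module.length_le_of_surjective (Submodule.factor h) (Submodule.factor_surjective h)

theorem hs_exact {A : Type u} [CommRing A] (q : Ideal A) {N₁ N₂ N₃ : Type*}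
    [AddCommGroup N₁] [Module A N₁] [AddCommGroup N₂] [Module A N₂] [AddCommGroup N₃] [Module A N₃]
    (f : N₁ →ₗ[A] N₂) (g : N₂ →ₗ[A] N₃) (hg : Function.Surjective g) (h : Function.Exact f g)
    (n : ℕ) :
    hs q N₂ n = Module.length A (N₁ ⧸ (q ^ n • ⊤ : Submodule A N₂).comap f) + hs q N₃ n := by
  have := length_quotient_exact f g hg h (q ^ n • ⊤)
  rwa [Submodule.map_smul'', Submodule.map_top, LinearMap.range_eq_top.2 hg] at this

theorem pow_smul_le_comap {A : Type u} [CommRing A] (q : Ideal A) {N₁ N₂ : Type*}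
    [AddCommGroup N₁] [Module A N₁] [AddCommGroup N₂] [Module A N₂]
    (f : N₁ →ₗ[A] N₂) (n : ℕ) :
    (q ^ n • ⊤ : Submodule A N₁) ≤ (q ^ n • ⊤ : Submodule A N₂).comap f := by
  rw [← Submodule.map_le_iff_le_comap, Submodule.map_smul'']
  exact Submodule.smul_mono le_rfl le_top

theorem hs_subadd {A : Type u} [CommRing A] (q : Ideal A) {N₁ N₂ N₃ : Type*}
    [AddCommGroup N₁] [Module A N₁] [AddCommGroup N₂] [Module A N₂] [AddCommGroup N₃] [Module A N₃]
    (f : N₁ →ₗ[A] N₂) (g : N₂ →ₗ[A] N₃) (hg : Function.Surjective g) (h : Function.Exact f g)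
    (n : ℕ) : hs q N₂ n ≤ hs q N₁ n + hs q N₃ n := by
  rw [hs_exact q f g hg h n]
  gcongr
  exact length_quotient_anti (pow_smul_le_comap q f n)

theorem hs_zero {A : Type u} [CommRing A] (q : Ideal A) (N : Type v) [AddCommGroup N]
    [Module A N] : hs q N 0 = 0 := by
  unfold hs
  rw [Module.length_eq_zero_iff, Submodule.Quotient.subsingleton_iff]
  simp

theorem hs_subsingleton {A : Type u} [CommRing A] (q : Ideal A) (N : Type v) [AddCommGroup N]
    [Module A N] [Subsingleton N] (n : ℕ) : hs q N n = 0 := by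
  unfold hs
  rw [Module.length_eq_zero_iff]
  infer_instance

/-- By the Artin-Rees lemma, the filtration induced on `N₁` by the `q`-adic one of `N₂` is, up to a
shift, contained in the `q`-adic filtration of `N₁`. -/
theorem hs_artinRees {A : Type u} [CommRing A] [IsNoetherianRing A] (q : Ideal A) {N₁ N₂ : Type*}
    [AddCommGroup N₁] [Module A N₁] [AddCommGroup N₂] [Module A N₂] [Module.Finite A N₂]
    (f : N₁ →ₗ[A] N₂) (hf : Function.Injective f) :
    ∃ k, ∀ n, hs q N₁ n ≤
      Module.length A (N₁ ⧸ (q ^ (n + k) • ⊤ : Submodule A N₂).comap f) := by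
  obtain ⟨k, hk⟩ := Ideal.exists_pow_inf_eq_pow_smul q (LinearMap.range f)
  refine ⟨k, fun n => length_quotient_anti ?_⟩
  intro x hx
  have h1 : f x ∈ q ^ (n + k) • (⊤ : Submodule A N₂) ⊓ LinearMap.range f := ⟨hx, x, rfl⟩
  rw [hk _ (Nat.le_add_left _ _), Nat.add_sub_cancel] at h1
  have h2 : f x ∈ q ^ n • LinearMap.range f := Submodule.smul_mono le_rfl inf_le_right h1
  rw [LinearMap.range_eq_map, ← Submodule.map_smul''] at h2
  obtain ⟨y, hy, hyx⟩ := h2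
  exact hf hyx ▸ hy

/-! ### Growth of the Hilbert-Samuel function -/

theorem isMaximal_of_mem_support_of_isFiniteLength {A : Type u} [CommRing A] {N : Type v}
    [AddCommGroup N] [Module A N] (h : IsFiniteLength A N) (p : PrimeSpectrum A)
    (hp : p ∈ Module.support A N) : p.asIdeal.IsMaximal := by
  induction h with
  | of_subsingleton => simp [Module.support_eq_empty] at hp
  | @of_simple_quotient N _ _ U hU _ ih =>
    rw [Module.support_of_exact (LinearMap.exact_subtype_mkQ U) U.subtype_injective
      U.mkQ_surjective] at hp
    rcases hp with hp | hp
    · exact ih hp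
    · obtain ⟨m, hm, ⟨e⟩⟩ := isSimpleModule_iff_quot_maximal.mp hU
      rw [e.support_eq, Module.support_eq_zeroLocus, Ideal.annihilator_quotient] at hp
      rw [← hm.eq_of_le p.2.ne_top hp]
      exact hm

/-- A polynomial bound on the Hilbert-Samuel functions of all `A/p` with `p ∈ Supp N` passes to `N`,
by subadditivity along a prime filtration. -/
theorem hs_bound_of_primes {A : Type u} [CommRing A] [IsNoetherianRing A] (q : Ideal A) (d : ℕ)
    (N : Type v) [AddCommGroup N] [Module A N] [hN : Module.Finite A N]
    (h : ∀ p ∈ Module.support A N, ∃ C : ℕ, ∀ n, hs q (A ⧸ p.asIdeal) n ≤ (C * (n + 1) ^ d : ℕ)) :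
    ∃ C : ℕ, ∀ n, hs q N n ≤ (C * (n + 1) ^ d : ℕ) := by
  induction hN using IsNoetherianRing.induction_on_isQuotientEquivQuotientPrime A with
  | subsingleton N => exact ⟨0, fun n => by simp [hs_subsingleton]⟩
  | quotient N p e =>
    obtain ⟨C, hC⟩ := h p (by
      rw [e.support_eq, Module.support_eq_zeroLocus, Ideal.annihilator_quotient]
      exact fun _ hx => hx)
    exact ⟨C, fun n => (hs_congr q e n).trans_le (hC n)⟩
  | exact N₁ N₂ N₃ f g hf hg hfg h₁ h₃ =>
    rw [Module.support_of_exact hfg hf hg] at h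
    obtain ⟨C₁, hC₁⟩ := h₁ fun p hp => h p (.inl hp)
    obtain ⟨C₃, hC₃⟩ := h₃ fun p hp => h p (.inr hp)
    refine ⟨C₁ + C₃, fun n => (hs_subadd q f g hg hfg n).trans ?_⟩
    rw [add_mul, Nat.cast_add]
    exact add_le_add (hC₁ n) (hC₃ n)

/-- The discrete derivative of the Hilbert-Samuel function of `A/p` is bounded by the function of
`A/(p + (x))`: multiplication by `x ∈ q` maps `q ^ n` into `q ^ (n + 1)`. -/
theorem hs_quotient_succ {A : Type u} [CommRing A] (q p : Ideal A) {x : A} (hx : x ∈ q) (n : ℕ) :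
    hs q (A ⧸ p) (n + 1) ≤ hs q (A ⧸ p) n + hs q (A ⧸ (p ⊔ Ideal.span {x})) (n + 1) := by
  let f : (A ⧸ p) →ₗ[A] (A ⧸ p) := LinearMap.lsmul A (A ⧸ p) x
  let g : (A ⧸ p) →ₗ[A] (A ⧸ (p ⊔ Ideal.span {x})) :=
    Submodule.factor (le_sup_left : p ≤ p ⊔ Ideal.span {x})
  have hfg : Function.Exact f g := by
    intro y
    obtain ⟨y, rfl⟩ := Submodule.mkQ_surjective _ y
    change Submodule.Quotient.mk y = 0 ↔ _
    rw [Submodule.Quotient.mk_eq_zero, Submodule.mem_sup]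
    constructor
    · rintro ⟨a, ha, b, hb, rfl⟩
      obtain ⟨c, rfl⟩ := Ideal.mem_span_singleton'.1 hb
      refine ⟨Submodule.Quotient.mk c, ?_⟩
      change Submodule.Quotient.mk (x * c) = Submodule.Quotient.mk _
      rw [Submodule.Quotient.eq]
      convert! p.neg_mem ha using 1
      ring
    · rintro ⟨c, hc⟩
      obtain ⟨c, rfl⟩ := Submodule.mkQ_surjective _ c
      change Submodule.Quotient.mk (x * c) = Submodule.Quotient.mk y at hc
      rw [Submodule.Quotient.eq] at hc
      exact ⟨_, p.neg_mem hc, c * x, Ideal.mem_span_singleton'.2 ⟨c, rfl⟩, by ring⟩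
  rw [hs_exact q f g (Submodule.factor_surjective _) hfg (n + 1)]
  gcongr
  refine length_quotient_anti ?_
  rw [← Submodule.map_le_iff_le_comap, pow_succ', mul_smul]
  rintro _ ⟨y, hy, rfl⟩
  exact Submodule.smul_mem_smul hx hy

theorem mem_support_quotient {A : Type u} [CommRing A] (I : Ideal A) (p : PrimeSpectrum A) :
    p ∈ Module.support A (A ⧸ I) ↔ I ≤ p.asIdeal := by
  rw [Module.support_eq_zeroLocus, Ideal.annihilator_quotient]
  rfl

/-- Summed form of `hs_quotient_succ`. -/
theorem hs_le_mul_of_quotient {A : Type u} [CommRing A] (q p : Ideal A) {x : A} (hx : x ∈ q)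
    (B : ℕ → ℕ) (hB : Monotone B)
    (h : ∀ n, hs q (A ⧸ (p ⊔ Ideal.span {x})) n ≤ (B n : ℕ)) (n : ℕ) :
    hs q (A ⧸ p) n ≤ (n * B n : ℕ) := by
  induction n with
  | zero => simp [hs_zero]
  | succ n ih =>
    refine (hs_quotient_succ q p hx n).trans ((add_le_add ih (h (n + 1))).trans ?_)
    rw [← Nat.cast_add, Nat.cast_le, add_mul, one_mul]
    gcongr
    exact hB n.le_succ

theorem hs_le_one_of_isMaximal {A : Type u} [CommRing A] (q p : Ideal A) (hp : p.IsMaximal)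
    (n : ℕ) : hs q (A ⧸ p) n ≤ 1 := by
  have : IsSimpleModule A (A ⧸ p) := isSimpleModule_iff_isCoatom.2 hp.out
  rw [← Module.length_eq_one A (A ⧸ p)]
  exact Module.length_le_of_surjective _ (Submodule.mkQ_surjective _)

/-- If `dim A/p ≤ d`, then the Hilbert-Samuel function of `A/p` is `O(n ^ d)`. The dimension of `A/p`
is expressed as the coheight of `p` in the spectrum. The set `T` stands for the support of a module
`M` with `M / q M` of finite length. -/
theorem hs_prime_bound {A : Type u} [CommRing A] [IsNoetherianRing A] (q : Ideal A)
    (T : Set (PrimeSpectrum A)) (hT : IsUpperSet T)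
    (hmax : ∀ p ∈ T, q ≤ p.asIdeal → p.asIdeal.IsMaximal) (d : ℕ) :
    ∀ p ∈ T, Order.coheight p < (d + 1 : ℕ) →
      ∃ C : ℕ, ∀ n, hs q (A ⧸ p.asIdeal) n ≤ (C * (n + 1) ^ d : ℕ) := by
  induction d with
  | zero =>
    intro p hp hd
    refine ⟨1, fun n => ?_⟩
    rw [zero_add, Nat.cast_one, Order.lt_one_iff, Order.coheight_eq_zero,
      PrimeSpectrum.isMax_iff] at hd
    simpa using hs_le_one_of_isMaximal q _ hd n
  | succ d ih =>
    intro p hp hd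
    by_cases hq : q ≤ p.asIdeal
    · refine ⟨1, fun n => (hs_le_one_of_isMaximal q _ (hmax p hp hq) n).trans ?_⟩
      rw [one_mul]
      exact_mod_cast Nat.one_le_pow _ _ n.succ_pos
    obtain ⟨x, hxq, hxp⟩ := SetLike.not_le_iff_exists.1 hq
    obtain ⟨C, hC⟩ := hs_bound_of_primes q d (A ⧸ (p.asIdeal ⊔ Ideal.span {x})) fun p' hp' => by
      rw [mem_support_quotient, sup_le_iff, Ideal.span_singleton_le_iff_mem] at hp'
      have hlt : p < p' := lt_of_le_of_ne hp'.1 fun h => hxp (h ▸ hp'.2)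
      refine ih p' (hT hlt.le hp) ?_
      have h1 := (Order.coheight_add_one_le hlt).trans_lt hd
      rw [Nat.cast_add _ 1] at h1
      exact lt_of_add_lt_add_right h1
    refine ⟨C, fun n => (hs_le_mul_of_quotient q p.asIdeal hxq _ ?_ hC n).trans ?_⟩
    · intro a b hab
      dsimp only
      gcongr
    · rw [Nat.cast_le, pow_succ]
      calc n * (C * (n + 1) ^ d) ≤ (n + 1) * (C * (n + 1) ^ d) := by gcongr; omega
        _ = _ := by ring

/-! ### Polynomials and limits -/

theorem poly_degree_le (P : Polynomial ℚ) (r C : ℕ)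
    (h : ∀ᶠ n : ℕ in atTop, |P.eval (n : ℚ)| ≤ C * (n + 1) ^ r) : P.degree ≤ r := by
  by_contra! hlt
  have h1 := (Polynomial.abs_div_tendsto_atTop_atTop_of_degree_gt P ((Polynomial.X + 1) ^ r)
    (by
      rw [Polynomial.degree_pow, ← Polynomial.C_1, Polynomial.degree_X_add_C]
      simpa using hlt)
    (pow_ne_zero _ (Polynomial.monic_X_add_C 1).ne_zero)).comp
      (tendsto_natCast_atTop_atTop (R := ℚ))
  obtain ⟨n, hn, hn'⟩ := ((h1.eventually_gt_atTop (C : ℚ)).and h).exists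
  have hpos : (0 : ℚ) < (n + 1) ^ r := by positivity
  simp only [Function.comp_apply, Polynomial.eval_pow, Polynomial.eval_add, Polynomial.eval_X,
    Polynomial.eval_one, abs_div, abs_of_pos hpos] at hn
  rw [lt_div_iff₀ hpos] at hn
  linarith

theorem poly_tendsto (P : Polynomial ℚ) (r : ℕ) (h : P.degree ≤ r) :
    Tendsto (fun n : ℕ => P.eval (n : ℚ) / (n : ℚ) ^ r) atTop (𝓝 (P.coeff r)) := by
  have hd : (P - Polynomial.C (P.coeff r) * Polynomial.X ^ r).degree
      < (Polynomial.X ^ r : Polynomial ℚ).degree := by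
    rw [Polynomial.degree_X_pow, Polynomial.degree_lt_iff_coeff_zero]
    intro m hm
    rw [Polynomial.coeff_sub, Polynomial.coeff_C_mul, Polynomial.coeff_X_pow]
    rcases hm.eq_or_lt with rfl | hm
    · simp
    · rw [Polynomial.coeff_eq_zero_of_degree_lt (h.trans_lt (by exact_mod_cast hm)),
        if_neg hm.ne']
      simp
  have h1 := (Polynomial.div_tendsto_atTop_zero_of_degree_lt _ _ hd).comp
      (tendsto_natCast_atTop_atTop (R := ℚ))
  have h2 := h1.add_const (P.coeff r)
  rw [zero_add] at h2
  refine h2.congr' ?_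
  filter_upwards [eventually_gt_atTop 0] with n hn
  have : (n : ℚ) ≠ 0 := by positivity
  simp only [Function.comp_apply, Polynomial.eval_sub, Polynomial.eval_mul, Polynomial.eval_C,
    Polynomial.eval_pow, Polynomial.eval_X]
  field_simp
  ring

theorem tendsto_zero_of_bound (u : ℕ → ℚ) (C d : ℕ) (hu : ∀ n, 0 ≤ u n)
    (h : ∀ n, u n ≤ C * (n + 1) ^ d) :
    Tendsto (fun n : ℕ => u n / (n : ℚ) ^ (d + 1)) atTop (𝓝 0) := by
  have hd : (Polynomial.C (C : ℚ) * (Polynomial.X + 1) ^ d).degree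
      < (Polynomial.X ^ (d + 1) : Polynomial ℚ).degree := by
    rw [Polynomial.degree_X_pow]
    refine (Polynomial.degree_le_of_natDegree_le ?_ : _ ≤ (d : WithBot ℕ)).trans_lt
      (by exact_mod_cast d.lt_succ_self)
    refine (Polynomial.natDegree_C_mul_le _ _).trans ?_
    rw [Polynomial.natDegree_pow, ← Polynomial.C_1, Polynomial.natDegree_X_add_C, mul_one]
  have h1 := (Polynomial.div_tendsto_atTop_zero_of_degree_lt _ _ hd).comp
      (tendsto_natCast_atTop_atTop (R := ℚ))
  refine tendsto_of_tendsto_of_tendsto_of_le_of_le tendsto_const_nhds h1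
    (fun n : ℕ => div_nonneg (hu n) (pow_nonneg n.cast_nonneg _)) (fun n => ?_)
  simp only [Function.comp_apply, Polynomial.eval_mul, Polynomial.eval_C, Polynomial.eval_add,
    Polynomial.eval_pow, Polynomial.eval_X, Polynomial.eval_one]
  gcongr
  exact h n

/-! ### Additivity of the leading term -/

/-- The normalised Hilbert-Samuel function `length (N / q ^ n N) / n ^ r`. An infinite length is
replaced by zero, so this is meaningful only together with finiteness of `hs q N n`. -/
noncomputable def hsRat {A : Type u} [CommRing A] (q : Ideal A) (N : Type v) [AddCommGroup N]
    [Module A N] (r n : ℕ) : ℚ :=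
  ((hs q N n).toNat : ℚ) / (n : ℚ) ^ r

theorem tendsto_shift (k r : ℕ) (u : ℕ → ℚ) (L : ℚ)
    (h : Tendsto (fun n : ℕ => u n / (n : ℚ) ^ r) atTop (𝓝 L)) :
    Tendsto (fun n : ℕ => u n / ((n + k : ℕ) : ℚ) ^ r) atTop (𝓝 L) := by
  have h1 : Tendsto (fun n : ℕ => (n : ℚ) / ((n : ℚ) + k)) atTop (𝓝 1) :=
    tendsto_natCast_div_add_atTop (k : ℚ)
  have h2 := h.mul (h1.pow r)
  rw [one_pow, mul_one] at h2
  refine h2.congr' ?_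
  filter_upwards [eventually_gt_atTop 0] with n hn
  have : (n : ℚ) ≠ 0 := by positivity
  have : (n : ℚ) + k ≠ 0 := by positivity
  push_cast
  rw [div_pow]
  field_simp

/-- The limit of the normalised Hilbert-Samuel function is additive in short exact sequences. -/
theorem tendsto_hsRat_of_exact {A : Type u} [CommRing A] [IsNoetherianRing A] (q : Ideal A) (r : ℕ)
    {N₁ N₂ N₃ : Type*}
    [AddCommGroup N₁] [Module A N₁] [AddCommGroup N₂] [Module A N₂] [AddCommGroup N₃] [Module A N₃]
    [Module.Finite A N₂]
    (f : N₁ →ₗ[A] N₂) (g : N₂ →ₗ[A] N₃) (hf : Function.Injective f) (hg : Function.Surjective g)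
    (h : Function.Exact f g) (h₁ : ∀ n, hs q N₁ n ≠ ⊤) (h₃ : ∀ n, hs q N₃ n ≠ ⊤) {a b : ℚ}
    (ha : Tendsto (hsRat q N₁ r) atTop (𝓝 a)) (hb : Tendsto (hsRat q N₃ r) atTop (𝓝 b)) :
    Tendsto (hsRat q N₂ r) atTop (𝓝 (a + b)) := by
  obtain ⟨k, hk⟩ := hs_artinRees q f hf
  let c : ℕ → ℕ∞ := fun n => Module.length A (N₁ ⧸ (q ^ n • ⊤ : Submodule A N₂).comap f)
  have hc : ∀ n, c n ≤ hs q N₁ n := fun n => length_quotient_anti (pow_smul_le_comap q f n)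
  have hct : ∀ n, c n ≠ ⊤ := fun n => ne_top_of_le_ne_top (h₁ n) (hc n)
  have hcl : Tendsto (fun n => ((c n).toNat : ℚ) / (n : ℚ) ^ r) atTop (𝓝 a) := by
    rw [← tendsto_add_atTop_iff_nat k]
    refine tendsto_of_tendsto_of_tendsto_of_le_of_le (tendsto_shift k r _ _ ha)
      ((tendsto_add_atTop_iff_nat k).2 ha) (fun n => ?_) (fun n => ?_)
    · dsimp only
      gcongr
      · exact hct _
      · exact hk n
    · dsimp only [hsRat]
      gcongr
      · exact h₁ _
      · exact hc _
  refine (hcl.add hb).congr fun n => ?_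
  unfold hsRat
  rw [hs_exact q f g hg h n, ENat.toNat_add (hct n) (h₃ n), Nat.cast_add, add_div]

/-! ### Lengths of localizations -/

/-- The length of `N_p` over `A_p`, with values in `ℕ∞`. -/
noncomputable def locLength {A : Type u} [CommRing A] (p : PrimeSpectrum A) (N : Type v)
    [AddCommGroup N] [Module A N] : ℕ∞ :=
  Module.length (Localization p.asIdeal.primeCompl) (LocalizedModule p.asIdeal.primeCompl N)

theorem locLength_exact {A : Type u} [CommRing A] (p : PrimeSpectrum A) {N₁ N₂ N₃ : Type*}
    [AddCommGroup N₁] [Module A N₁] [AddCommGroup N₂] [Module A N₂] [AddCommGroup N₃] [Module A N₃]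
    (f : N₁ →ₗ[A] N₂) (g : N₂ →ₗ[A] N₃) (hf : Function.Injective f) (hg : Function.Surjective g)
    (h : Function.Exact f g) : locLength p N₂ = locLength p N₁ + locLength p N₃ := by
  let S := p.asIdeal.primeCompl
  exact Module.length_eq_add_of_exact
    (IsLocalizedModule.mapExtendScalars S (LocalizedModule.mkLinearMap S N₁)
      (LocalizedModule.mkLinearMap S N₂) (Localization S) f)
    (IsLocalizedModule.mapExtendScalars S (LocalizedModule.mkLinearMap S N₂)
      (LocalizedModule.mkLinearMap S N₃) (Localization S) g)
    (IsLocalizedModule.map_injective S _ _ f hf)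
    (IsLocalizedModule.map_surjective S _ _ g hg)
    (IsLocalizedModule.map_exact S _ _ _ f g h)

theorem locLength_eq_zero {A : Type u} [CommRing A] (p : PrimeSpectrum A) (N : Type v)
    [AddCommGroup N] [Module A N] (h : p ∉ Module.support A N) : locLength p N = 0 := by
  rw [Module.notMem_support_iff] at h
  exact Module.length_eq_zero

theorem locLength_congr {A : Type u} [CommRing A] (p : PrimeSpectrum A) {N : Type v}
    [AddCommGroup N] [Module A N] {N' : Type*} [AddCommGroup N'] [Module A N'] (e : N ≃ₗ[A] N') :
    locLength p N = locLength p N' := by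
  rw [locLength_exact p e.toLinearMap (0 : N' →ₗ[A] PUnit.{1}) e.injective
    (Function.surjective_to_subsingleton _) ((e.toLinearMap.exact_zero_iff_surjective _).2 e.surjective),
    locLength_eq_zero p PUnit (by simp [Module.support_eq_empty]), add_zero]

/-- `(A/p)_p` is simple over `A_p`: any nonzero fraction divides every other one. -/
theorem locLength_quotient_self {A : Type u} [CommRing A] (p : PrimeSpectrum A) :
    locLength p (A ⧸ p.asIdeal) = 1 := by
  refine Module.length_eq_one_iff.2 (isSimpleModule_iff_toSpanSingleton_surjective.2 ⟨?_, ?_⟩)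
  · exact Module.mem_support_iff.1 ((mem_support_quotient _ p).2 le_rfl)
  · intro x hx y
    induction x with | _ a s
    induction y with | _ b t
    obtain ⟨a, rfl⟩ := Submodule.mkQ_surjective _ a
    obtain ⟨b, rfl⟩ := Submodule.mkQ_surjective _ b
    have ha : a ∉ p.asIdeal := fun ha => hx (by
      rw [Submodule.mkQ_apply, (Submodule.Quotient.mk_eq_zero _).2 ha, LocalizedModule.zero_mk])
    refine ⟨Localization.mk (b * s) (t * ⟨a, ha⟩), ?_⟩
    rw [LinearMap.toSpanSingleton_apply, LocalizedModule.mk_smul_mk, LocalizedModule.mk_eq]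
    refine ⟨1, ?_⟩
    simp only [one_smul, Submonoid.smul_def, Submonoid.coe_mul, ← map_smul, smul_eq_mul]
    congr 1
    ring

/-! ### Dimension -/

theorem ringKrullDim_quotient_prime {A : Type u} [CommRing A] (p : PrimeSpectrum A) :
    ringKrullDim (A ⧸ p.asIdeal) = (Order.coheight p : WithBot ℕ∞) := by
  rw [ringKrullDim_quotient, Order.coheight_eq_krullDim_Ici]
  rfl

theorem coheight_le_of_mem_support {A : Type u} [CommRing A] {N : Type v}
    [AddCommGroup N] [Module A N] [Module.Finite A N] {p : PrimeSpectrum A}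
    (hp : p ∈ Module.support A N) :
    (Order.coheight p : WithBot ℕ∞) ≤ ringKrullDim (A ⧸ Module.annihilator A N) := by
  rw [← ringKrullDim_quotient_prime]
  exact ringKrullDim_le_of_surjective
    (Ideal.Quotient.factor (Module.mem_support_iff_of_finite.1 hp)) (Ideal.Quotient.factor_surjective _)

/-! ### The associativity formula -/

open scoped Classical in
/-- The associativity formula for limits, over modules `N` supported in `T`. The set `T` has
dimension at most `r`, `S` is its part of dimension exactly `r`, and `e p` is the limit of the
normalised Hilbert-Samuel function of `A/p`. -/
theorem tendsto_hsRat {A : Type u} [CommRing A] [IsNoetherianRing A] (q : Ideal A) (r : ℕ)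
    (T : Set (PrimeSpectrum A)) (hT : ∀ p ∈ T, Order.coheight p ≤ r)
    (S : Finset (PrimeSpectrum A)) (hS : ∀ p, p ∈ S ↔ p ∈ T ∧ Order.coheight p = r)
    (e : PrimeSpectrum A → ℚ)
    (hfin : ∀ p ∈ T, ∀ n, hs q (A ⧸ p.asIdeal) n ≠ ⊤)
    (hlim : ∀ p ∈ T, Tendsto (hsRat q (A ⧸ p.asIdeal) r) atTop (𝓝 (if p ∈ S then e p else 0)))
    (N : Type v) [AddCommGroup N] [Module A N] [hN : Module.Finite A N]
    (hNT : Module.support A N ⊆ T) :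
    (∀ n, hs q N n ≠ ⊤) ∧ (∀ p ∈ S, locLength p N ≠ ⊤) ∧
      Tendsto (hsRat q N r) atTop (𝓝 (∑ p ∈ S, ((locLength p N).toNat : ℚ) * e p)) := by
  induction hN using IsNoetherianRing.induction_on_isQuotientEquivQuotientPrime A with
  | subsingleton N =>
    have h0 : ∀ p, locLength p N = 0 := fun p => locLength_eq_zero p N (by
      rw [Module.support_eq_empty (R := A) (M := N)]; exact Set.notMem_empty p)
    refine ⟨fun n => by simp [hs_subsingleton], fun p _ => by simp [h0], ?_⟩
    refine tendsto_const_nhds.congr fun n => ?_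
    simp [hsRat, hs_subsingleton, h0]
  | quotient N p₀ φ =>
    have hmem : ∀ p, p ∈ Module.support A N ↔ p₀ ≤ p := fun p => by
      rw [φ.support_eq, mem_support_quotient]; rfl
    have hp₀ : p₀ ∈ T := hNT ((hmem p₀).2 le_rfl)
    have hloc : ∀ p ∈ S, locLength p N = if p = p₀ then 1 else 0 := by
      intro p hp
      split_ifs with hpp
      · rw [locLength_congr p φ, hpp, locLength_quotient_self]
      -- a strict inclusion `p₀ < p` would give `dim A/p₀ ≥ r + 1`
      · refine locLength_eq_zero p N fun hsupp => ?_
        have hlt : p₀ < p := lt_of_le_of_ne ((hmem p).1 hsupp) (Ne.symm hpp)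
        have h1 := (Order.coheight_add_one_le hlt).trans (hT p₀ hp₀)
        rw [((hS p).1 hp).2] at h1
        exact absurd h1 (by exact_mod_cast Nat.not_succ_le_self r)
    refine ⟨fun n => hs_congr q φ n ▸ hfin p₀ hp₀ n, fun p hp => ?_, ?_⟩
    · rw [hloc p hp]
      split_ifs <;> simp
    · have : ∑ p ∈ S, ((locLength p N).toNat : ℚ) * e p = if p₀ ∈ S then e p₀ else 0 := by
        rw [← Finset.sum_ite_eq' S p₀ e]
        refine Finset.sum_congr rfl fun p hp => ?_
        rw [hloc p hp]
        split_ifs <;> simp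
      rw [this]
      refine (hlim p₀ hp₀).congr fun n => ?_
      rw [hsRat, hsRat, hs_congr q φ n]
  | exact N₁ N₂ N₃ f g hf hg hfg h₁ h₃ =>
    rw [Module.support_of_exact hfg hf hg, Set.union_subset_iff] at hNT
    obtain ⟨a₁, b₁, c₁⟩ := h₁ hNT.1
    obtain ⟨a₃, b₃, c₃⟩ := h₃ hNT.2
    refine ⟨fun n => ne_top_of_le_ne_top (WithTop.add_ne_top.2 ⟨a₁ n, a₃ n⟩)
      (hs_subadd q f g hg hfg n), fun p hp => ?_, ?_⟩
    · rw [locLength_exact p f g hf hg hfg]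
      exact WithTop.add_ne_top.2 ⟨b₁ p hp, b₃ p hp⟩
    · have : ∑ p ∈ S, ((locLength p N₂).toNat : ℚ) * e p =
          ∑ p ∈ S, ((locLength p N₁).toNat : ℚ) * e p +
            ∑ p ∈ S, ((locLength p N₃).toNat : ℚ) * e p := by
        rw [← Finset.sum_add_distrib]
        refine Finset.sum_congr rfl fun p hp => ?_
        rw [locLength_exact p f g hf hg hfg, ENat.toNat_add (b₁ p hp) (b₃ p hp), Nat.cast_add,
          add_mul]
      rw [this]
      exact tendsto_hsRat_of_exact q r f g hf hg hfg a₁ a₃ c₁ c₃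

theorem isHSPoly_eventually {A : Type u} [CommRing A] (q : Ideal A) (N : Type v) [AddCommGroup N]
    [Module A N] (P : Polynomial ℚ) (h : IsHSPoly A q N P) :
    ∀ᶠ n : ℕ in atTop, ((hs q N n).toNat : ℚ) = P.eval (n : ℚ) := by
  obtain ⟨n₀, h⟩ := h
  filter_upwards [eventually_ge_atTop n₀] with n hn
  obtain ⟨c, hc, hP⟩ := h n hn
  rw [hsVal_eq_hs, WithBot.coe_inj] at hc
  rw [hc, ← hP, ENat.toNat_natCast]

/-- The `O(n ^ r)` bound forces the Hilbert-Samuel polynomial to have degree at most `r`, so the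
normalised function tends to its coefficient of degree `r`, even if that coefficient vanishes. -/
theorem tendsto_coeff_of_isHSPoly {A : Type u} [CommRing A] (q : Ideal A) (N : Type v) [AddCommGroup N]
    [Module A N] (P : Polynomial ℚ) (h : IsHSPoly A q N P) (r C : ℕ)
    (hb : ∀ n, hs q N n ≤ (C * (n + 1) ^ r : ℕ)) :
    Tendsto (hsRat q N r) atTop (𝓝 (P.coeff r)) := by
  have he := isHSPoly_eventually q N P h
  refine (poly_tendsto P r (poly_degree_le P r C ?_)).congr' ?_
  · filter_upwards [he] with n hn
    rw [← hn, Nat.abs_cast]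
    exact_mod_cast ENat.toNat_le_of_le_natCast (hb n)
  · filter_upwards [he] with n hn
    rw [hsRat, hn]

/-- Associativity formula for multiplicities: if `dim_A M = r` and `S` is the set of
minimal primes `p` of `Supp M` with `dim A/p = r`, then the degree-`r` coefficient of the
Hilbert–Samuel polynomial of `(q, M)` (i.e. `e_q(M)/r!`) is the sum over `p ∈ S` of
`length_{A_p}(M_p)` times the degree-`r` coefficient of the Hilbert–Samuel polynomial of
`(q, A/p)` (i.e. `e_q(A/p)/r!`). -/
theorem stmt6 (A : Type*) [CommRing A] [IsNoetherianRing A] [IsLocalRing A]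
    (M : Type*) [AddCommGroup M] [Module A M] [Module.Finite A M]
    (q : Ideal A) (hq : IsFiniteLength A (M ⧸ (q • ⊤ : Submodule A M)))
    (r : ℕ) (hr : mDim A M = (r : ℕ∞))
    (S : Finset (PrimeSpectrum A))
    (hS : ∀ p : PrimeSpectrum A,
      p ∈ S ↔ Minimal (· ∈ Module.support A M) p ∧ mDim A (A ⧸ p.asIdeal) = (r : ℕ∞))
    (l : PrimeSpectrum A → ℕ) (hl : ∀ p ∈ S, (l p : ℕ∞) = locLen A M p)
    (P : Polynomial ℚ) (hP : IsHSPoly A q M P)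
    (Pp : PrimeSpectrum A → Polynomial ℚ)
    (hPp : ∀ p ∈ S, IsHSPoly A q (A ⧸ p.asIdeal) (Pp p)) :
    P.coeff r = ∑ p ∈ S, (l p : ℚ) * (Pp p).coeff r := by
  classical
  have hdim : ∀ p : PrimeSpectrum A,
      mDim A (A ⧸ p.asIdeal) = (Order.coheight p : WithBot ℕ∞) := fun p => by
    rw [mDim, Ideal.annihilator_quotient, ringKrullDim_quotient_prime]
  have hle : ∀ p ∈ Module.support A M, Order.coheight p ≤ r := fun p hp => by
    have h1 := (coheight_le_of_mem_support hp).trans hr.le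
    exact_mod_cast h1
  have hS' : ∀ p, p ∈ S ↔ p ∈ Module.support A M ∧ Order.coheight p = r := by
    intro p
    rw [hS, hdim, WithBot.coe_inj]
    -- minimality is automatic: a smaller prime of the support would have dimension above `r`
    refine ⟨fun h => ⟨h.1.prop, h.2⟩, fun h => ⟨⟨h.1, fun p' hp' hle' => ?_⟩, h.2⟩⟩
    by_contra hnot
    have h1 := (Order.coheight_add_one_le (lt_of_le_not_ge hle' hnot)).trans (hle p' hp')
    rw [h.2] at h1
    exact absurd h1 (by exact_mod_cast Nat.not_succ_le_self r)
  have hbound := hs_prime_bound q (Module.support A M)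
    (fun a b hab ha => Module.mem_support_mono hab ha)
    (fun p hp hqp => isMaximal_of_mem_support_of_isFiniteLength hq p (by
      rw [Module.support_quotient]
      exact ⟨hp, hqp⟩))
  have hr_bound : ∀ p ∈ Module.support A M,
      ∃ C : ℕ, ∀ n, hs q (A ⧸ p.asIdeal) n ≤ (C * (n + 1) ^ r : ℕ) := fun p hp =>
    hbound r p hp ((hle p hp).trans_lt (by exact_mod_cast r.lt_succ_self))
  have hfin : ∀ p ∈ Module.support A M, ∀ n, hs q (A ⧸ p.asIdeal) n ≠ ⊤ := fun p hp n => by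
    obtain ⟨C, hC⟩ := hr_bound p hp
    exact ne_top_of_le_ne_top (ENat.natCast_ne_top _) (hC n)
  have hlim : ∀ p ∈ Module.support A M, Tendsto (hsRat q (A ⧸ p.asIdeal) r) atTop
      (𝓝 (if p ∈ S then (Pp p).coeff r else 0)) := by
    intro p hp
    split_ifs with hpS
    · obtain ⟨C, hC⟩ := hr_bound p hp
      exact tendsto_coeff_of_isHSPoly q _ _ (hPp p hpS) r C hC
    · have hlt : Order.coheight p < r :=
        lt_of_le_of_ne (hle p hp) fun h => hpS ((hS' p).2 ⟨hp, h⟩)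
      cases r with
      | zero => simp at hlt
      | succ d =>
        obtain ⟨C, hC⟩ := hbound d p hp hlt
        refine tendsto_zero_of_bound _ C d (fun n => Nat.cast_nonneg _) fun n => ?_
        exact_mod_cast ENat.toNat_le_of_le_natCast (hC n)
  -- both sides are limits of the normalised Hilbert-Samuel function of `M`
  obtain ⟨-, -, h3⟩ := tendsto_hsRat q r (Module.support A M) hle S hS' (fun p => (Pp p).coeff r)
    hfin hlim M subset_rfl
  obtain ⟨C, hC⟩ := hs_bound_of_primes q r M hr_bound
  rw [tendsto_nhds_unique (tendsto_coeff_of_isHSPoly q M P hP r C hC) h3]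
  refine Finset.sum_congr rfl fun p hp => ?_
  have h4 : (l p : ℕ∞) = locLength p M := by
    have := hl p hp
    rw [locLen, mLength, ← Module.coe_length, WithBot.coe_inj] at this
    exact this
  rw [← h4, ENat.toNat_natCast]
end

section
/- Let H be a finite-dimensional complex vector space, O the ring of germs at 0 of holomorphic functions on C^n (equivalently, the ring of convergent or formal power series C[[z_1,...,z_n]]), and let K_1, ..., K_n be pairwise commuting nilpotent endomorphisms of H. Consider the Koszul complex over the O-module O ⊗ H of the n commuting O-linear operators T_i = K_i − z_i (i.e., acting by K_i minus multiplication by the variable z_i). Then the homology of this Koszul complex vanishes in all degrees except the top degree n, where it has dimension over C equal to dim_C H. -/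
/-!
The identification `ℂ[[z]] ⊗ H ≃ H[[z]]` turns the operators into `Kᵢ - zᵢ` on `H`-valued power
series. The operator `A = ∑ Kᵢ ∂ᵢ` is nilpotent, being a sum of commuting nilpotents, and
`[A, -zᵢ] = -Kᵢ` commutes with `A`; hence `exp A (Kᵢ - zᵢ) = -zᵢ exp A`
(`exp_mul_of_commutator`, `straighten_koszulOp`). So over `ℂ` the complex is isomorphic to the one
for `K = 0`.

For the operators `-zᵢ` there is an explicit contraction. The differential preserves the
multidegree `b - 1_s` of the coefficient of `z ^ b` in the `s`-component. In every multidegree with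
a nonnegative coordinate, adjoining the first such coordinate to `s` is a contracting homotopy
(`totalD_htpy_add`). The only remaining multidegree is `(-1, ..., -1)`, supported on `s = univ`
and `b = 0`. This gives exactness below the top degree, and identifies the cokernel of the last
differential with `H` through the constant term (`mem_range_top_iff`).
-/

open Finset in
/-- The degree-`k` term of the (cochain) Koszul complex of `n` commuting operators on a
module `M`: functions from the `k`-element subsets of `Fin n` to `M`. -/
abbrev KoszulMod (n : ℕ) (M : Type*) (k : ℕ) : Type _ :=
  {s : Finset (Fin n) // s.card = k} → M

/-- The Koszul differential (raising degree): for commuting operators `φ i` on `M`,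
`(D f) t = ∑_{i ∈ t} (-1)^{#{j ∈ t | j < i}} • φ i (f (t \ {i}))`. -/
noncomputable def koszulD {R : Type*} [CommRing R] {M : Type*} [AddCommGroup M] [Module R M]
    {n : ℕ} (φ : Fin n → M →ₗ[R] M) (k : ℕ) :
    KoszulMod n M k →ₗ[R] KoszulMod n M (k + 1) where
  toFun f t := ∑ i ∈ (t : Finset (Fin n)).attach,
    ((-1 : ℤ) ^ ((t : Finset (Fin n)).filter (fun j => j < i.1)).card) •
      φ i.1 (f ⟨(t : Finset (Fin n)).erase i.1, by
        simp [Finset.card_erase_of_mem i.2, t.2]⟩)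
  map_add' f g := by
    funext t
    simp [Finset.sum_add_distrib, smul_add]
  map_smul' r f := by
    funext t
    simp only [Pi.smul_apply, map_smul, RingHom.id_apply, Finset.smul_sum]
    exact Finset.sum_congr rfl fun i _ => (smul_comm _ _ _)

/-- The submodule of boundaries in degree `j` of the Koszul complex. -/
noncomputable def koszulB {R : Type*} [CommRing R] {M : Type*} [AddCommGroup M] [Module R M]
    {n : ℕ} (φ : Fin n → M →ₗ[R] M) : (j : ℕ) → Submodule R (KoszulMod n M j)
  | 0 => ⊥
  | (j + 1) => LinearMap.range (koszulD φ j)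

/-- The degree-`j` homology of the Koszul complex: cycles modulo boundaries. -/
noncomputable abbrev koszulH {R : Type*} [CommRing R] {M : Type*} [AddCommGroup M] [Module R M]
    {n : ℕ} (φ : Fin n → M →ₗ[R] M) (j : ℕ) :=
  (LinearMap.ker (koszulD φ j)) ⧸
    (Submodule.comap (LinearMap.ker (koszulD φ j)).subtype (koszulB φ j))


open TensorProduct

set_option synthInstance.maxHeartbeats 800000
set_option maxHeartbeats 800000

/-- The operator `K i − z i` on `O ⊗ H`, where `O = ℂ[[z 1, ..., z n]]`: the `O`-linear
extension of the endomorphism `K i` of `H` minus multiplication by the variable `z i`. -/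
noncomputable def koszulOp (n : ℕ) (H : Type*) [AddCommGroup H] [Module ℂ H]
    (K : Fin n → H →ₗ[ℂ] H) (i : Fin n) :
    (MvPowerSeries (Fin n) ℂ ⊗[ℂ] H) →ₗ[MvPowerSeries (Fin n) ℂ]
      (MvPowerSeries (Fin n) ℂ ⊗[ℂ] H) :=
  LinearMap.baseChange (MvPowerSeries (Fin n) ℂ) (K i)
    - LinearMap.lsmul (MvPowerSeries (Fin n) ℂ) (MvPowerSeries (Fin n) ℂ ⊗[ℂ] H)
        (MvPowerSeries.X i)

/-- The top-degree (`= n`) homology of the Koszul complex of the operators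
`K i − z i` on `O ⊗ H`, i.e. the cokernel of the last differential, as a `ℂ`-module. -/
noncomputable abbrev koszulTopH (n : ℕ) (H : Type*) [AddCommGroup H] [Module ℂ H]
    (K : Fin n → H →ₗ[ℂ] H) :=
  KoszulMod n (MvPowerSeries (Fin n) ℂ ⊗[ℂ] H) (n - 1 + 1) ⧸
    (LinearMap.range (koszulD (koszulOp n H K) (n - 1))).restrictScalars ℂ

/-! ### Signs and the Koszul differential on all subsets at once -/

/-- The Koszul sign `(-1) ^ #{j ∈ t | j < i}`. -/
def eps {n : ℕ} (t : Finset (Fin n)) (i : Fin n) : ℤ := (-1) ^ (t.filter (fun j => j < i)).card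

lemma eps_mul_self {n : ℕ} (t : Finset (Fin n)) (i : Fin n) : eps t i * eps t i = 1 := by
  unfold eps; rw [← mul_pow]; simp

lemma eps_erase_of_le {n : ℕ} (t : Finset (Fin n)) {i j : Fin n} (h : i ≤ j) :
    eps (t.erase j) i = eps t i := by
  unfold eps
  congr 2
  ext a; simp only [Finset.mem_filter, Finset.mem_erase]
  exact ⟨fun h' => ⟨h'.1.2, h'.2⟩, fun h' => ⟨⟨(h'.2.trans_le h).ne, h'.1⟩, h'.2⟩⟩

lemma eps_insert_self {n : ℕ} (t : Finset (Fin n)) (i : Fin n) :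
    eps (insert i t) i = eps t i := by
  unfold eps
  rw [Finset.filter_insert, if_neg (lt_irrefl i)]

lemma eps_insert_of_lt {n : ℕ} {t : Finset (Fin n)} {i j : Fin n} (h : j < i) (hj : j ∉ t) :
    eps (insert j t) i = - eps t i := by
  unfold eps
  rw [Finset.filter_insert, if_pos h, Finset.card_insert_of_notMem (by simp [hj]), pow_succ]
  simp

/-- The Koszul differential on functions of all subsets of `Fin n`, without a fixed degree. -/
def totalD {n : ℕ} {M : Type*} [AddCommGroup M] (φ : Fin n → M → M)
    (F : Finset (Fin n) → M) (t : Finset (Fin n)) : M :=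
  ∑ i ∈ t, eps t i • φ i (F (t.erase i))

lemma eps_erase_of_lt {n : ℕ} {t : Finset (Fin n)} {i j : Fin n} (h : j < i) (hj : j ∈ t) :
    eps (t.erase j) i = - eps t i := by
  conv_rhs => rw [← Finset.insert_erase hj, eps_insert_of_lt h (Finset.notMem_erase j t), neg_neg]

lemma eps_mul_eps_erase {n : ℕ} {t : Finset (Fin n)} {i j : Fin n} (hi : i ∈ t) (hj : j ∈ t)
    (hij : i ≠ j) : eps t i * eps (t.erase i) j = - (eps t j * eps (t.erase j) i) := by
  rcases lt_or_gt_of_ne hij with h | h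
  · rw [eps_erase_of_lt h hi, eps_erase_of_le t h.le]; ring
  · rw [eps_erase_of_lt h hj, eps_erase_of_le t h.le]; ring

/-- The Koszul differential of commuting operators squares to zero: the terms removing `i` and
`j` in the two possible orders cancel. -/
lemma totalD_totalD {R : Type*} [CommRing R] {M : Type*} [AddCommGroup M] [Module R M]
    {n : ℕ} (φ : Fin n → M →ₗ[R] M) (hφ : ∀ i j x, φ i (φ j x) = φ j (φ i x))
    (F : Finset (Fin n) → M) (t : Finset (Fin n)) :
    totalD (fun i => φ i) (totalD (fun i => φ i) F) t = 0 := by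
  simp only [totalD, map_sum, map_zsmul, Finset.smul_sum, smul_smul]
  rw [Finset.sum_sigma']
  refine Finset.sum_involution (fun p _ => ⟨p.2, p.1⟩) ?_ ?_ ?_ ?_
  · rintro ⟨i, j⟩ hp
    simp only [Finset.mem_sigma, Finset.mem_erase] at hp
    simp only
    rw [eps_mul_eps_erase hp.1 hp.2.2 hp.2.1.symm, hφ i j, Finset.erase_right_comm, neg_smul,
      neg_add_cancel]
  · rintro ⟨i, j⟩ hp _ h
    simp only [Finset.mem_sigma, Finset.mem_erase] at hp
    exact hp.2.1 (congrArg Sigma.fst h)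
  · rintro ⟨i, j⟩ hp
    simp only [Finset.mem_sigma, Finset.mem_erase] at hp ⊢
    exact ⟨hp.2.2, hp.2.1.symm, hp.1⟩
  · rintro ⟨i, j⟩ _
    rfl

lemma koszulD_apply_eq_totalD {R : Type*} [CommRing R] {M : Type*} [AddCommGroup M] [Module R M]
    {n : ℕ} (φ : Fin n → M →ₗ[R] M) (k : ℕ) (f : KoszulMod n M k) (F : Finset (Fin n) → M)
    (hF : ∀ s, f s = F s) (t : {s : Finset (Fin n) // s.card = k + 1}) :
    koszulD φ k f t = totalD (fun i => φ i) F t := by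
  rw [totalD, ← Finset.sum_attach]
  simp only [koszulD, LinearMap.coe_mk, AddHom.coe_mk, hF]
  rfl

/-! ### The contraction for the operators `-zᵢ` -/

section Model

variable {n : ℕ} {H : Type*} [AddCommGroup H]

variable (n H) in
/-- `H`-valued formal power series in `n` variables, as families of coefficients. -/
abbrev PS := (Fin n →₀ ℕ) → H

/-- The index `i` is the pivot of the pair `(s, b)`, which stands for the coefficient of `z ^ b` in
the `s`-component of a cochain. The differential preserves the multidegree `b - 1_s`; a pivot is
the first coordinate where this is nonnegative, with the additional requirement `i ∉ s`. -/
def IsPivot (s : Finset (Fin n)) (b : Fin n →₀ ℕ) (i : Fin n) : Prop :=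
  i ∉ s ∧ ∀ j < i, j ∈ s ∧ b j = 0

open Classical in
/-- The contracting homotopy: adjoin the pivot to `s` and raise the exponent of its variable by one.
A pair `(s, b)` has at most one pivot, so the sum has at most one nonzero term. -/
noncomputable def htpy (F : Finset (Fin n) → PS n H) (s : Finset (Fin n)) : PS n H := fun b =>
  ∑ i, if IsPivot s b i then - (eps s i • F (insert i s) (b + Finsupp.single i 1)) else 0

lemma htpy_of_isPivot (F : Finset (Fin n) → PS n H) {s : Finset (Fin n)} {b : Fin n →₀ ℕ}
    {i : Fin n} (h : IsPivot s b i) :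
    htpy F s b = - (eps s i • F (insert i s) (b + Finsupp.single i 1)) := by
  classical
  unfold htpy
  rw [Finset.sum_eq_single i, if_pos h]
  · intro j _ hj
    refine if_neg fun h' => ?_
    rcases lt_or_gt_of_ne hj with hlt | hlt
    · exact h'.1 (h.2 j hlt).1
    · exact h.1 (h'.2 i hlt).1
  · simp

lemma htpy_of_not (F : Finset (Fin n) → PS n H) {s : Finset (Fin n)} {b : Fin n →₀ ℕ}
    (h : ∀ i, ¬ IsPivot s b i) : htpy F s b = 0 := by
  classical
  unfold htpy
  exact Finset.sum_eq_zero fun i _ => if_neg (h i)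

lemma htpy_zero {k : ℕ} {G : Finset (Fin n) → PS n H} (hG : ∀ s, s.card = k + 1 → G s = 0)
    {t : Finset (Fin n)} (ht : t.card = k) : htpy G t = 0 := by
  classical
  funext b
  refine Finset.sum_eq_zero fun i _ => ?_
  split_ifs with h
  · rw [hG _ (by rw [Finset.card_insert_of_notMem h.1, ht])]; simp
  · rfl

variable [Module ℂ H]

/-- Multiplication by `-zᵢ` on `H`-valued power series. -/
noncomputable def negX (i : Fin n) : PS n H →ₗ[ℂ] PS n H where
  toFun f b := if b i = 0 then 0 else - f (b - Finsupp.single i 1)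
  map_add' f g := by ext b; by_cases h : b i = 0 <;> simp [h, add_comm]
  map_smul' c f := by ext b; by_cases h : b i = 0 <;> simp [h]

lemma negX_apply (i : Fin n) (f : PS n H) (b : Fin n →₀ ℕ) :
    negX i f b = if b i = 0 then 0 else - f (b - Finsupp.single i 1) := rfl

lemma negX_add_single (i : Fin n) (f : PS n H) (b : Fin n →₀ ℕ) :
    negX i f (b + Finsupp.single i 1) = - f b := by
  simp [negX_apply]

lemma totalD_apply (F : Finset (Fin n) → PS n H) (t : Finset (Fin n)) (b : Fin n →₀ ℕ) :
    totalD (fun i => negX i) F t b =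
      ∑ i ∈ t, if b i = 0 then 0 else - (eps t i • F (t.erase i) (b - Finsupp.single i 1)) := by
  simp only [totalD, Finset.sum_apply, Pi.smul_apply, negX_apply]
  refine Finset.sum_congr rfl fun i _ => ?_
  split_ifs <;> simp

/-- The homotopy formula `D h + h D = 1`, valid except at the constant term of the top component
`t = univ`. -/
lemma totalD_htpy_add (F : Finset (Fin n) → PS n H) (t : Finset (Fin n)) (b : Fin n →₀ ℕ)
    (h : ∃ i, i ∉ t ∨ b i ≠ 0) :
    totalD (fun i => negX i) (htpy F) t b + htpy (totalD (fun i => negX i) F) t b = F t b := by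
  classical
  obtain ⟨p, hp, hmin⟩ : ∃ p, (p ∉ t ∨ b p ≠ 0) ∧ ∀ j < p, j ∈ t ∧ b j = 0 := by
    obtain ⟨p, hp, hmin⟩ := WellFounded.has_min (wellFounded_lt (α := Fin n))
      {i | i ∉ t ∨ b i ≠ 0} h
    refine ⟨p, hp, fun j hj => ?_⟩
    have := fun h' => hmin j h' hj
    simpa [not_or] using this
  -- If `p ∈ t`, then `(t, b)` has no pivot and only `i = p` contributes to `D h`.
  by_cases hpt : p ∈ t
  · have hbp : b p ≠ 0 := by tauto
    rw [htpy_of_not (s := t), add_zero, totalD_apply, Finset.sum_eq_single p]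
    · have hpiv : IsPivot (t.erase p) (b - Finsupp.single p 1) p := by
        refine ⟨by simp, fun j hj => ⟨?_, ?_⟩⟩
        · simp [hj.ne, (hmin j hj).1]
        · simp [(hmin j hj).2]
      have hb : b - Finsupp.single p 1 + Finsupp.single p 1 = b :=
        tsub_add_cancel_of_le (by simpa [Nat.one_le_iff_ne_zero] using hbp)
      rw [if_neg hbp, htpy_of_isPivot _ hpiv, Finset.insert_erase hpt, hb,
        eps_erase_of_le _ le_rfl, smul_neg, neg_neg, smul_smul, eps_mul_self, one_smul]
    · intro i hi hip
      split_ifs with hbi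
      · rfl
      · have hlt : p < i := by
          rcases lt_or_gt_of_ne hip with h' | h'
          · exact absurd (hmin i h').2 hbi
          · exact h'
        rw [htpy_of_not]; · simp
        intro q hq
        rcases lt_trichotomy q p with h' | h' | h'
        · exact hq.1 (by simp [(hmin q h').1, (h'.trans hlt).ne])
        · subst h'; exact hq.1 (by simp [hpt, hlt.ne])
        · have := (hq.2 p h').2
          simp [hlt.ne'] at this
          exact hbp this
    · exact fun h' => absurd hpt h'
    · intro q hq
      rcases lt_trichotomy q p with hqp | hqp | hqp
      · exact hq.1 (hmin q hqp).1
      · subst hqp; exact hq.1 hpt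
      · exact hbp (hq.2 p hqp).2
  -- If `p ∉ t`, then `i = p` in `h D` gives `F t b`, and all remaining terms of `h D` and `D h`
  -- cancel in pairs.
  · have hpiv : IsPivot t b p := ⟨hpt, hmin⟩
    rw [htpy_of_isPivot _ hpiv, totalD_apply, totalD_apply, Finset.sum_insert hpt,
      Finset.erase_insert hpt, eps_insert_self]
    have h1 : (b + Finsupp.single p 1 : Fin n →₀ ℕ) p ≠ 0 := by simp
    rw [if_neg h1, add_tsub_cancel_right, smul_add, smul_neg, smul_smul, eps_mul_self, one_smul,
      neg_add, neg_neg, add_left_comm, Finset.smul_sum, ← sub_eq_add_neg, ← Finset.sum_sub_distrib,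
      Finset.sum_eq_zero, add_zero]
    intro i hi
    have hip : i ≠ p := fun h' => hpt (h' ▸ hi)
    have hbi' : (b + Finsupp.single p 1 : Fin n →₀ ℕ) i = b i := by simp [hip.symm]
    rw [hbi']
    split_ifs with hbi
    · simp
    · have hlt : p < i := by
        rcases lt_or_gt_of_ne hip with h' | h'
        · exact absurd (hmin i h').2 hbi
        · exact h'
      have hpiv' : IsPivot (t.erase i) (b - Finsupp.single i 1) p := by
        refine ⟨by simp [hpt], fun j hj => ⟨?_, ?_⟩⟩
        · simp [(hj.trans hlt).ne, (hmin j hj).1]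
        · simp [(hmin j hj).2]
      have hb : b + Finsupp.single p 1 - Finsupp.single i 1
          = b - Finsupp.single i 1 + Finsupp.single p 1 := by
        rw [tsub_add_eq_add_tsub]
        simpa [Nat.one_le_iff_ne_zero] using hbi
      rw [htpy_of_isPivot _ hpiv', eps_insert_of_lt hlt hpt, eps_erase_of_le _ hlt.le, hb,
        Finset.erase_insert_of_ne hip.symm]
      simp only [smul_neg, neg_neg, neg_smul, smul_smul]
      rw [mul_comm, sub_self]

/-! ### The Taylor shift -/

/-- The partial derivative `∂ᵢ` of `H`-valued power series. -/
noncomputable def partialD (i : Fin n) : Module.End ℂ (PS n H) where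
  toFun f b := ((b i + 1 : ℕ) : ℂ) • f (b + Finsupp.single i 1)
  map_add' f g := by ext b; simp
  map_smul' c f := by ext b; simp only [Pi.smul_apply, RingHom.id_apply]; rw [smul_comm]

lemma partialD_apply (i : Fin n) (f : PS n H) (b : Fin n →₀ ℕ) :
    partialD i f b = ((b i + 1 : ℕ) : ℂ) • f (b + Finsupp.single i 1) := rfl

/-- An endomorphism of `H` acting coefficientwise on `H`-valued power series. -/
def coeffMap : Module.End ℂ H →+* Module.End ℂ (PS n H) where
  toFun L := L.compLeft _
  map_one' := rfl
  map_mul' _ _ := rfl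
  map_zero' := rfl
  map_add' _ _ := rfl

lemma coeffMap_apply (L : Module.End ℂ H) (f : PS n H) (b : Fin n →₀ ℕ) :
    coeffMap L f b = L (f b) := rfl

lemma commute_coeffMap_partialD (L : Module.End ℂ H) (i : Fin n) :
    Commute (coeffMap L) (partialD i : Module.End ℂ (PS n H)) := by
  refine LinearMap.ext fun f => funext fun b => ?_
  simp only [Module.End.mul_apply, partialD_apply, coeffMap_apply, map_smul]

lemma commute_coeffMap_negX (L : Module.End ℂ H) (i : Fin n) :
    Commute (coeffMap L) (negX i : Module.End ℂ (PS n H)) := by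
  refine LinearMap.ext fun f => funext fun b => ?_
  simp only [Module.End.mul_apply, negX_apply, coeffMap_apply]
  split_ifs <;> simp

lemma commute_partialD (i j : Fin n) :
    Commute (partialD i) (partialD j : Module.End ℂ (PS n H)) := by
  rcases eq_or_ne i j with rfl | hij
  · exact Commute.refl _
  refine LinearMap.ext fun f => funext fun b => ?_
  simp only [Module.End.mul_apply, partialD_apply, Finsupp.add_apply,
    Finsupp.single_eq_of_ne hij, Finsupp.single_eq_of_ne hij.symm, add_zero]
  rw [smul_comm, add_right_comm]

lemma commute_partialD_negX_of_ne {i j : Fin n} (hij : i ≠ j) :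
    Commute (partialD i) (negX j : Module.End ℂ (PS n H)) := by
  refine LinearMap.ext fun f => funext fun b => ?_
  simp only [Module.End.mul_apply, partialD_apply, negX_apply, Finsupp.add_apply,
    Finsupp.single_eq_of_ne hij, Finsupp.single_eq_of_ne hij.symm, add_zero,
    Finsupp.tsub_apply, tsub_zero]
  split_ifs with h
  · simp
  · rw [smul_neg, tsub_add_eq_add_tsub]
    simpa [Nat.one_le_iff_ne_zero] using h

/-- The canonical commutation relation `[∂ᵢ, -zᵢ] = -1`. -/
lemma partialD_mul_negX (i : Fin n) :
    partialD i * (negX i : Module.End ℂ (PS n H)) = negX i * partialD i - 1 := by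
  refine LinearMap.ext fun f => funext fun b => ?_
  simp only [Module.End.mul_apply, partialD_apply, negX_add_single, LinearMap.sub_apply,
    Module.End.one_apply, Pi.sub_apply]
  rw [negX_apply]
  split_ifs with h
  · simp [h]
  · have hb : b - Finsupp.single i 1 + Finsupp.single i 1 = b :=
      tsub_add_cancel_of_le (by simpa [Nat.one_le_iff_ne_zero] using h)
    have hc : (b - Finsupp.single i 1 : Fin n →₀ ℕ) i + 1 = b i := by
      simp; omega
    rw [partialD_apply, hb, hc]
    push_cast
    module

lemma negX_comm (i j : Fin n) (f : PS n H) : negX i (negX j f) = negX j (negX i f) := by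
  rcases eq_or_ne i j with rfl | hij
  · rfl
  funext b
  simp only [negX_apply, Finsupp.tsub_apply, Finsupp.single_eq_of_ne hij,
    Finsupp.single_eq_of_ne hij.symm, tsub_zero]
  split_ifs <;> simp [tsub_right_comm]

/-- The nilpotent operator `A = ∑ Kᵢ ∂ᵢ`; its exponential is the Taylor shift
`f(z) ↦ f(z + K)`. -/
noncomputable def shiftGen (K : Fin n → H →ₗ[ℂ] H) : Module.End ℂ (PS n H) :=
  ∑ i, coeffMap (K i) * partialD i

lemma commute_coeffMap_mul_partialD (K : Fin n → H →ₗ[ℂ] H) (hcomm : ∀ i j, K i ∘ₗ K j = K j ∘ₗ K i) (i j : Fin n) :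
    Commute (coeffMap (K i)) (coeffMap (K j) * partialD j : Module.End ℂ (PS n H)) :=
  Commute.mul_right (Commute.map (hcomm i j) coeffMap) (commute_coeffMap_partialD _ _)

lemma isNilpotent_shiftGen (K : Fin n → H →ₗ[ℂ] H) (hcomm : ∀ i j, K i ∘ₗ K j = K j ∘ₗ K i)
    (hnil : ∀ i, IsNilpotent (K i)) : IsNilpotent (shiftGen K) := by
  refine Commute.isNilpotent_sum (fun i _ => ?_) fun i j _ _ => ?_
  · exact Commute.isNilpotent_mul_right (commute_coeffMap_partialD _ _) ((hnil i).map coeffMap)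
  · exact Commute.mul_left (commute_coeffMap_mul_partialD K hcomm i j)
      (Commute.mul_right (commute_coeffMap_partialD _ _).symm (commute_partialD i j))

lemma shiftGen_mul_negX (K : Fin n → H →ₗ[ℂ] H) (i : Fin n) :
    shiftGen K * negX i = negX i * shiftGen K - coeffMap (K i) := by
  rw [shiftGen, Finset.sum_mul, Finset.mul_sum, ← Finset.add_sum_erase _ _ (Finset.mem_univ i),
    ← Finset.add_sum_erase _ (fun j => negX i * _) (Finset.mem_univ i), add_sub_right_comm]
  congr 1
  · rw [mul_assoc, partialD_mul_negX, mul_sub, mul_one, ← mul_assoc, ← mul_assoc,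
      (commute_coeffMap_negX (K i) i).eq]
  · refine Finset.sum_congr rfl fun j hj => ?_
    rw [mul_assoc, (commute_partialD_negX_of_ne (Finset.ne_of_mem_erase hj)).eq, ← mul_assoc,
      ← mul_assoc, (commute_coeffMap_negX (K j) i).eq]

/-- Restriction of the complex scalars to `ℚ`, needed to speak of `IsNilpotent.exp` in the
endomorphism ring. -/
noncomputable instance instAlgebraRatEndPS : Algebra ℚ (Module.End ℂ (PS n H)) :=
  Algebra.compHom _ (algebraMap ℚ ℂ)

/-- If the commutator `[A, Z] = -L` commutes with the nilpotent `A`, then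
`exp A (Z + L) exp (-A) = Z`. -/
lemma exp_mul_of_commutator {S : Type*} [Ring S] [Algebra ℚ S] {A Z L : S} (hA : IsNilpotent A)
    (hL : Commute L A) (h : A * Z = Z * A - L) :
    IsNilpotent.exp A * (Z + L) = Z * IsNilpotent.exp A := by
  have hpow : ∀ m : ℕ, A ^ (m + 1) * Z = Z * A ^ (m + 1) - (m + 1 : ℚ) • (A ^ m * L) := by
    intro m
    induction m with
    | zero => simp [h]
    | succ m ih =>
      rw [pow_succ' A (m + 1), mul_assoc, ih, mul_sub, ← mul_assoc, h, mul_smul_comm,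
        ← mul_assoc A (A ^ m), ← pow_succ', sub_mul, (hL.pow_right (m + 1)).eq, mul_assoc]
      push_cast
      module
  obtain ⟨N, hN⟩ := hA
  have hN' : A ^ (N + 1) = 0 := by rw [pow_succ, hN, zero_mul]
  have e1 : IsNilpotent.exp A * Z = Z * IsNilpotent.exp A - IsNilpotent.exp A * L := by
    have h1 : IsNilpotent.exp A = ∑ m ∈ Finset.range N, ((m + 1).factorial : ℚ)⁻¹ • A ^ (m + 1)
        + 1 := by
      rw [IsNilpotent.exp_eq_sum hN', Finset.sum_range_succ']; simp
    have h2 : IsNilpotent.exp A * L = ∑ m ∈ Finset.range N, (m.factorial : ℚ)⁻¹ • (A ^ m * L) := by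
      rw [IsNilpotent.exp_eq_sum hN, Finset.sum_mul]; simp only [smul_mul_assoc]
    rw [h2, h1, add_mul, mul_add, add_sub_right_comm, Finset.sum_mul,
      Finset.mul_sum, ← Finset.sum_sub_distrib]
    congr 1
    · refine Finset.sum_congr rfl fun m _ => ?_
      rw [smul_mul_assoc, hpow, smul_sub, mul_smul_comm, smul_smul]
      congr 2
      rw [Nat.factorial_succ]
      have := Nat.factorial_ne_zero m
      push_cast
      field_simp
    · simp
  rw [mul_add, e1, sub_add_cancel]

/-- Additive maps intertwining the operators intertwine the Koszul differentials. -/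
lemma totalD_comp {M M' G : Type*} [AddCommGroup M] [AddCommGroup M'] [FunLike G M M']
    [AddMonoidHomClass G M M'] (E : G)
    {φ : Fin n → M → M} {ψ : Fin n → M' → M'} (h : ∀ i x, E (φ i x) = ψ i (E x))
    (F : Finset (Fin n) → M) (t : Finset (Fin n)) :
    totalD ψ (fun s => E (F s)) t = E (totalD φ F t) := by
  simp only [totalD, map_sum, map_zsmul, h]

end Model

/-! ### Transport of exactness along a straightening -/

/-- A Koszul cochain of degree `k`, extended by zero to subsets of all cardinalities. -/
def extendZero {n : ℕ} {M : Type*} [AddCommGroup M] {k : ℕ} (f : KoszulMod n M k)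
    (s : Finset (Fin n)) : M := if h : s.card = k then f ⟨s, h⟩ else 0

lemma extendZero_coe {n : ℕ} {M : Type*} [AddCommGroup M] {k : ℕ} (f : KoszulMod n M k)
    (s : {s : Finset (Fin n) // s.card = k}) : extendZero f s = f s := dif_pos s.2

section Transport

variable {n : ℕ} {R M H : Type*} [CommRing R] [AddCommGroup M] [Module R M] [AddCommGroup H]
  [Module ℂ H] (E : M ≃+ PS n H) {φ : Fin n → M →ₗ[R] M}

lemma totalD_eq_zero_of_cocycle (hE : ∀ i x, E (φ i x) = negX i (E x)) {k : ℕ} {f : KoszulMod n M k}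
    (hf : koszulD φ k f = 0) (s : Finset (Fin n)) (hs : s.card = k + 1) :
    totalD (fun i => negX i) (fun s => E (extendZero f s)) s = 0 := by
  rw [totalD_comp E (φ := fun i => φ i) hE,
    ← koszulD_apply_eq_totalD φ k f _ (fun s => (extendZero_coe f s).symm) ⟨s, hs⟩, hf]
  simp

lemma eq_zero_of_koszulD_zero (hE : ∀ i x, E (φ i x) = negX i (E x)) (hn : 0 < n)
    (f : KoszulMod n M 0) (hf : koszulD φ 0 f = 0) : f = 0 := by
  funext ⟨t, ht⟩
  have ht' : t = ∅ := Finset.card_eq_zero.1 ht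
  have h2 := htpy_zero (totalD_eq_zero_of_cocycle E hE hf) ht
  have : E (f ⟨t, ht⟩) = 0 := by
    funext b
    have h3 := totalD_htpy_add (fun s => E (extendZero f s)) t b ⟨⟨0, hn⟩, Or.inl (by simp [ht'])⟩
    rw [h2] at h3
    rw [← extendZero_coe f ⟨t, ht⟩, ← h3]
    simp [totalD, ht']
  simpa using this

/-- A cochain for which the contraction provides a primitive is a coboundary. -/
lemma mem_range_of_totalD (hE : ∀ i x, E (φ i x) = negX i (E x)) {k : ℕ}
    (f : KoszulMod n M (k + 1))
    (h : ∀ t b, t.card = k + 1 → totalD (fun i => negX i) (htpy fun s => E (extendZero f s)) t b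
      = E (extendZero f t) b) : f ∈ LinearMap.range (koszulD φ k) := by
  let G : Finset (Fin n) → M := fun s => E.symm (htpy (fun s => E (extendZero f s)) s)
  refine ⟨fun s => G s, ?_⟩
  funext t
  rw [koszulD_apply_eq_totalD φ k _ G (fun _ => rfl)]
  apply E.injective
  rw [← totalD_comp E (φ := fun i => φ i) hE]
  funext b
  rw [← extendZero_coe f t, ← h t b t.2]
  simp [G]

lemma mem_range_of_koszulD_eq_zero (hE : ∀ i x, E (φ i x) = negX i (E x)) {k : ℕ} (hk : k + 1 < n)
    (f : KoszulMod n M (k + 1)) (hf : koszulD φ (k + 1) f = 0) :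
    f ∈ LinearMap.range (koszulD φ k) := by
  refine mem_range_of_totalD E hE f fun t b ht => ?_
  have hex : ∃ i, i ∉ t := by
    by_contra! h
    have := Finset.card_eq_of_equiv_fin (Finset.equivFinOfCardEq (Finset.eq_univ_iff_forall.2 h ▸ Finset.card_fin n))
    omega
  rw [← totalD_htpy_add (fun s => E (extendZero f s)) t b (hex.imp fun _ => Or.inl),
    htpy_zero (totalD_eq_zero_of_cocycle E hE hf) ht]
  simp

lemma koszulD_koszulD (hE : ∀ i x, E (φ i x) = negX i (E x)) {k : ℕ} (f : KoszulMod n M k) :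
    koszulD φ (k + 1) (koszulD φ k f) = 0 := by
  funext t
  rw [koszulD_apply_eq_totalD φ (k + 1) _ (totalD (fun i => φ i) (extendZero f))
    (koszulD_apply_eq_totalD φ k f _ fun s => (extendZero_coe f s).symm)]
  exact totalD_totalD φ (fun i j x => E.injective (by simp only [hE, negX_comm i j])) _ _

/-- In top degree a cochain is a coboundary exactly when the constant term of its straightened
value vanishes. -/
lemma mem_range_top_iff (hE : ∀ i x, E (φ i x) = negX i (E x)) {k : ℕ} (hk : k + 1 = n)
    (f : KoszulMod n M (k + 1)) :
    f ∈ LinearMap.range (koszulD φ k) ↔ E (f ⟨Finset.univ, by simp [hk]⟩) 0 = 0 := by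
  constructor
  · rintro ⟨g, rfl⟩
    rw [koszulD_apply_eq_totalD φ k g _ (fun s => (extendZero_coe g s).symm),
      ← totalD_comp E (φ := fun i => φ i) hE, totalD_apply]
    simp
  · intro h
    refine mem_range_of_totalD E hE f fun t b ht => ?_
    obtain rfl : t = Finset.univ := by
      rw [← Finset.card_eq_iff_eq_univ, ht, hk, Fintype.card_fin]
    rcases eq_or_ne b 0 with rfl | hb
    -- Each summand of the differential has a factor `zᵢ`, so its constant term vanishes.
    · rw [totalD_apply]
      rw [← extendZero_coe f] at h
      simpa using h.symm
    · rw [← totalD_htpy_add (fun s => E (extendZero f s)) _ b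
        ((Finsupp.ne_iff.1 hb).imp fun _ => Or.inr), htpy_of_not (s := Finset.univ)]
      · simp
      · exact fun i hi => hi.1 (Finset.mem_univ i)

end Transport

/-! ### Straightening the operators on the tensor product -/

/-- The identification of `ℂ[[z]] ⊗ H` with `H[[z]]`, sending `p ⊗ h` to the series whose
coefficients are the multiples of `h` by the coefficients of `p`. It is bijective because `H` is
finite-dimensional. -/
noncomputable def tensorEquiv (n : ℕ) (H : Type*) [AddCommGroup H] [Module ℂ H]
    [FiniteDimensional ℂ H] : (MvPowerSeries (Fin n) ℂ ⊗[ℂ] H) ≃ₗ[ℂ] PS n H :=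
  LinearEquiv.ofBijective
    (TensorProduct.lift (LinearMap.mk₂ ℂ (fun (p : MvPowerSeries (Fin n) ℂ) (h : H) (b : Fin n →₀ ℕ) =>
      MvPowerSeries.coeff b p • h)
      (fun _ _ _ => funext fun _ => by rw [map_add, add_smul]; rfl)
      (fun _ _ _ => funext fun _ => by rw [map_smul, smul_assoc]; rfl)
      (fun _ _ _ => funext fun _ => smul_add _ _ _)
      (fun _ _ _ => funext fun _ => smul_comm _ _ _)))
    (by
      let B := Module.finBasis ℂ H
      let C := B.baseChange (MvPowerSeries (Fin n) ℂ)
      constructor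
      · rw [injective_iff_map_eq_zero]
        intro x hx
        rw [← C.sum_repr x] at hx ⊢
        refine Finset.sum_eq_zero fun j _ => ?_
        suffices C.repr x j = 0 by rw [this, zero_smul]
        ext b
        have h1 := congrFun hx b
        simp only [C, map_sum, Module.Basis.baseChange_apply, TensorProduct.smul_tmul', smul_eq_mul, mul_one,
          TensorProduct.lift.tmul, LinearMap.mk₂_apply, Finset.sum_apply, Pi.zero_apply] at h1
        exact Fintype.linearIndependent_iff.1 B.linearIndependent _ h1 j
      · intro g
        refine ⟨∑ j, (fun b => B.repr (g b) j : MvPowerSeries (Fin n) ℂ) ⊗ₜ B j, ?_⟩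
        funext b
        simp only [map_sum, Finset.sum_apply]
        exact B.sum_repr (g b))

lemma tensorEquiv_tmul {n : ℕ} {H : Type*} [AddCommGroup H] [Module ℂ H]
    [FiniteDimensional ℂ H] (p : MvPowerSeries (Fin n) ℂ) (h : H) (b : Fin n →₀ ℕ) :
    tensorEquiv n H (p ⊗ₜ h) b = MvPowerSeries.coeff b p • h := rfl

lemma tensorEquiv_koszulOp {n : ℕ} {H : Type*} [AddCommGroup H] [Module ℂ H]
    [FiniteDimensional ℂ H] (K : Fin n → H →ₗ[ℂ] H) (i : Fin n)
    (x : MvPowerSeries (Fin n) ℂ ⊗[ℂ] H) :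
    tensorEquiv n H (koszulOp n H K i x) = (negX i + coeffMap (K i) : Module.End ℂ (PS n H)) (tensorEquiv n H x) := by
  induction x with
  | zero => simp only [map_zero]
  | add x y hx hy => simp only [map_add, hx, hy]
  | tmul p h =>
    funext b
    rw [koszulOp, LinearMap.sub_apply, map_sub, LinearMap.baseChange_tmul, LinearMap.lsmul_apply,
      TensorProduct.smul_tmul', Pi.sub_apply, LinearMap.add_apply, Pi.add_apply, negX_apply,
      coeffMap_apply]
    have hle : Finsupp.single i 1 ≤ b ↔ b i ≠ 0 := by simp [Nat.one_le_iff_ne_zero]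
    simp only [tensorEquiv_tmul, map_smul, smul_eq_mul, MvPowerSeries.X_def,
      MvPowerSeries.coeff_monomial_mul, hle, one_mul]
    by_cases hb : b i = 0
    · simp [hb]
    · simp [hb, sub_eq_neg_add]

/-- The `ℂ`-linear isomorphism `ℂ[[z]] ⊗ H ≃ H[[z]]` given by the identification `tensorEquiv`
followed by `exp (∑ Kᵢ ∂ᵢ)`. It is not `ℂ[[z]]`-linear. -/
noncomputable def straighten (n : ℕ) (H : Type*) [AddCommGroup H] [Module ℂ H]
    [FiniteDimensional ℂ H] (K : Fin n → H →ₗ[ℂ] H) (hA : IsNilpotent (shiftGen K)) :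
    (MvPowerSeries (Fin n) ℂ ⊗[ℂ] H) ≃ₗ[ℂ] PS n H :=
  tensorEquiv n H ≪≫ₗ LinearMap.GeneralLinearGroup.toLinearEquiv (IsNilpotent.isUnit_exp hA).unit

/-- The straightening carries `Kᵢ - zᵢ` to `-zᵢ`, thereby removing `K` from the complex. -/
lemma straighten_koszulOp {n : ℕ} {H : Type*} [AddCommGroup H] [Module ℂ H]
    [FiniteDimensional ℂ H] (K : Fin n → H →ₗ[ℂ] H) (hcomm : ∀ i j, K i ∘ₗ K j = K j ∘ₗ K i)
    (hA : IsNilpotent (shiftGen K)) (i : Fin n) (x : MvPowerSeries (Fin n) ℂ ⊗[ℂ] H) :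
    straighten n H K hA (koszulOp n H K i x) = negX i (straighten n H K hA x) := by
  change IsNilpotent.exp (shiftGen K) (tensorEquiv n H _) =
    negX i (IsNilpotent.exp (shiftGen K) (tensorEquiv n H x))
  rw [tensorEquiv_koszulOp]
  exact LinearMap.congr_fun (exp_mul_of_commutator hA
    (Commute.sum_right _ _ _ fun j _ => commute_coeffMap_mul_partialD K hcomm i j) (shiftGen_mul_negX K i)) _

/-- Let `H` be a finite-dimensional complex vector space, `O = ℂ[[z 1, ..., z n]]`, and
`K 1, ..., K n` pairwise commuting nilpotent endomorphisms of `H`.  The Koszul complex of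
the commuting operators `K i − z i` on the `O`-module `O ⊗ H` is exact in all degrees
below the top degree `n` (for degree `0` this reads `ker D₀ = ⊥`, for `0 < j < n` it
reads `ker Dⱼ = range Dⱼ₋₁`), while the top-degree homology — the cokernel of the last
differential — has dimension `dim_ℂ H` over `ℂ`. -/
theorem stmt9 (n : ℕ) (hn : 0 < n) (H : Type*) [AddCommGroup H] [Module ℂ H]
    [FiniteDimensional ℂ H]
    (K : Fin n → H →ₗ[ℂ] H) (hcomm : ∀ i j, K i ∘ₗ K j = K j ∘ₗ K i)
    (hnil : ∀ i, IsNilpotent (K i)) :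
    LinearMap.ker (koszulD (koszulOp n H K) 0) = ⊥ ∧
    (∀ j : ℕ, j + 1 < n →
      LinearMap.ker (koszulD (koszulOp n H K) (j + 1)) =
        LinearMap.range (koszulD (koszulOp n H K) j)) ∧
    FiniteDimensional ℂ (koszulTopH n H K) ∧
    Module.finrank ℂ (koszulTopH n H K) = Module.finrank ℂ H := by
  have hA := isNilpotent_shiftGen K hcomm hnil
  have hE : ∀ i x, (straighten n H K hA).toAddEquiv (koszulOp n H K i x) =
      negX i ((straighten n H K hA).toAddEquiv x) := straighten_koszulOp K hcomm hA
  refine ⟨?_, fun j hj => le_antisymm ?_ ?_, ?_⟩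
  · exact (Submodule.eq_bot_iff _).2 fun f hf => eq_zero_of_koszulD_zero _ hE hn f hf
  · exact fun f hf => mem_range_of_koszulD_eq_zero _ hE hj f hf
  · rintro _ ⟨f, rfl⟩
    exact koszulD_koszulD _ hE f
  · let ev : KoszulMod n (MvPowerSeries (Fin n) ℂ ⊗[ℂ] H) (n - 1 + 1) →ₗ[ℂ] H :=
      LinearMap.proj (0 : Fin n →₀ ℕ) ∘ₗ (straighten n H K hA).toLinearMap ∘ₗ
        LinearMap.proj ⟨Finset.univ, by simp; omega⟩
    have hsurj : Function.Surjective ev := fun h =>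
      ⟨fun _ => (straighten n H K hA).symm fun _ => h, by simp [ev]⟩
    have hker : (LinearMap.range (koszulD (koszulOp n H K) (n - 1))).restrictScalars ℂ =
        LinearMap.ker ev := by
      ext f
      exact mem_range_top_iff _ hE (by omega) f
    let Q : koszulTopH n H K ≃ₗ[ℂ] H :=
      (Submodule.quotEquivOfEq _ _ hker).trans (ev.quotKerEquivOfSurjective hsurj)
    exact ⟨Module.Finite.equiv Q.symm, Q.finrank_eq⟩
end

section
/- Let A be a commutative Noetherian local ring, q an ideal, and M a finitely generated A-module with M/qM of finite length. Let z_1,...,z_r be generators of q with r = dim_A(M). Then the Euler characteristic of the Koszul complex Σ_{j=0}^r (−1)^j length(H_j(K_*(z_1,...,z_r; M))) equals the multiplicity e_q(M). -/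
/-! ### The contracting homotopies of the Koszul complex -/

section Homotopy

variable {R : Type*} [CommRing R] {M : Type*} [AddCommGroup M] [Module R M] {n : ℕ}

/-- The sign `(-1)^{#{j ∈ t | j < i}}` of the Koszul complex. -/
def kSign (i : Fin n) (t : Finset (Fin n)) : ℤ := (-1) ^ (t.filter (fun j => j < i)).card

/-- Extension by zero of a degree-`k` Koszul cochain to a function on all finite subsets. -/
noncomputable def kExt {k : ℕ} (f : KoszulMod n M k) (s : Finset (Fin n)) : M :=
  if h : s.card = k then f ⟨s, h⟩ else 0

/-- The Koszul differential on functions of all finite subsets, with no degree attached. -/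
noncomputable def kD (φ : Fin n → M →ₗ[R] M) (f : Finset (Fin n) → M) (t : Finset (Fin n)) : M :=
  ∑ i ∈ t, kSign i t • φ i (f (t.erase i))

/-- Contraction with the `i`-th basis vector, on functions of all finite subsets. -/
def kContr (i : Fin n) (f : Finset (Fin n) → M) (s : Finset (Fin n)) : M :=
  if i ∈ s then 0 else kSign i s • f (insert i s)

lemma kSign_mul_self (i : Fin n) (t : Finset (Fin n)) : kSign i t * kSign i t = 1 := by
  unfold kSign
  rw [← mul_pow]; simp

lemma kSign_insert_self (i : Fin n) (t : Finset (Fin n)) : kSign i (insert i t) = kSign i t := by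
  simp [kSign, Finset.filter_insert]

lemma kSign_erase_self (i : Fin n) (t : Finset (Fin n)) : kSign i (t.erase i) = kSign i t := by
  unfold kSign
  congr 2
  ext j
  simp only [Finset.mem_filter, Finset.mem_erase]
  constructor
  · tauto
  · rintro ⟨h1, h2⟩
    exact ⟨⟨h2.ne, h1⟩, h2⟩

/-- The sign rule behind the anticommutation of contraction and exterior multiplication. -/
lemma kSign_anticomm {i k : Fin n} {t : Finset (Fin n)} (hi : i ∉ t) (hk : k ∈ t) :
    kSign i t * kSign k (insert i t) = -(kSign k t * kSign i (t.erase k)) := by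
  obtain ⟨s, hs, rfl⟩ : ∃ s, k ∉ s ∧ insert k s = t :=
    ⟨t.erase k, Finset.notMem_erase k t, Finset.insert_erase hk⟩
  have hik : i ≠ k := by rintro rfl; exact hi hk
  have his : i ∉ s := fun h => hi (Finset.mem_insert_of_mem h)
  rw [Finset.erase_insert hs, Finset.insert_comm, kSign_insert_self, kSign_insert_self]
  rcases lt_or_gt_of_ne hik with h | h
  · have h1 : kSign i (insert k s) = kSign i s := by
      simp [kSign, Finset.filter_insert, h.not_gt]
    have h2 : kSign k (insert i s) = - kSign k s := by
      unfold kSign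
      rw [Finset.filter_insert, if_pos h, Finset.card_insert_of_notMem (by simp [his])]
      ring
    rw [h1, h2]; ring
  · have h1 : kSign k (insert i s) = kSign k s := by
      simp [kSign, Finset.filter_insert, h.not_gt]
    have h2 : kSign i (insert k s) = - kSign i s := by
      unfold kSign
      rw [Finset.filter_insert, if_pos h, Finset.card_insert_of_notMem (by simp [hs])]
      ring
    rw [h1, h2]; ring

/-- Cartan's formula: contraction with `e_i` is a homotopy between `φ i` and zero. -/
lemma kD_kContr (φ : Fin n → M →ₗ[R] M) (i : Fin n) (f : Finset (Fin n) → M)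
    (t : Finset (Fin n)) : kD φ (kContr i f) t + kContr i (kD φ f) t = φ i (f t) := by
  by_cases hi : i ∈ t
  · have h0 : kContr i (kD φ f) t = 0 := by simp [kContr, hi]
    rw [h0, add_zero, kD, Finset.sum_eq_single i]
    · rw [kContr, if_neg (Finset.notMem_erase i t), Finset.insert_erase hi, map_zsmul, smul_smul,
        kSign_erase_self, kSign_mul_self, one_smul]
    · intro k hk hki
      rw [kContr, if_pos (Finset.mem_erase.2 ⟨hki.symm, hi⟩)]
      simp
    · exact fun h => absurd hi h
  · have h1 : kContr i (kD φ f) t =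
        φ i (f t) + ∑ k ∈ t, (kSign i t * kSign k (insert i t)) •
          φ k (f ((insert i t).erase k)) := by
      rw [kContr, if_neg hi, kD, Finset.sum_insert hi, smul_add, smul_smul, kSign_insert_self,
        kSign_mul_self, one_smul, Finset.erase_insert hi, Finset.smul_sum]
      simp_rw [smul_smul]
    have h2 : kD φ (kContr i f) t = ∑ k ∈ t, (kSign k t * kSign i (t.erase k)) •
          φ k (f ((insert i t).erase k)) := by
      refine Finset.sum_congr rfl fun k hk => ?_
      have hik : i ≠ k := by rintro rfl; exact hi hk
      rw [kContr, if_neg (fun h => hi (Finset.mem_of_mem_erase h)), map_zsmul, smul_smul,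
        Finset.erase_insert_of_ne hik]
    rw [h1, h2, add_left_comm, ← Finset.sum_add_distrib, Finset.sum_eq_zero, add_zero]
    intro k hk
    rw [kSign_anticomm hi hk, ← add_smul, add_neg_cancel, zero_smul]

lemma kExt_coe {k : ℕ} (f : KoszulMod n M k) (s : {s : Finset (Fin n) // s.card = k}) :
    kExt f s = f s := by
  simp [kExt, s.2]

lemma kExt_of_ne {k : ℕ} (f : KoszulMod n M k) {s : Finset (Fin n)} (h : s.card ≠ k) :
    kExt f s = 0 := by
  simp [kExt, h]

lemma koszulD_apply (φ : Fin n → M →ₗ[R] M) {k : ℕ} (f : KoszulMod n M k)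
    (t : {s : Finset (Fin n) // s.card = k + 1}) : koszulD φ k f t = kD φ (kExt f) t := by
  rw [kD, ← Finset.sum_attach]
  refine Finset.sum_congr rfl fun i _ => ?_
  have h : (t.1.erase i.1).card = k := by simp [Finset.card_erase_of_mem i.2, t.2]
  rw [← kExt_coe f ⟨_, h⟩]
  rfl

lemma kExt_koszulD (φ : Fin n → M →ₗ[R] M) {k : ℕ} (f : KoszulMod n M k) :
    kExt (koszulD φ k f) = kD φ (kExt f) := by
  funext t
  by_cases ht : t.card = k + 1
  · exact (kExt_coe _ ⟨t, ht⟩).trans (koszulD_apply φ f ⟨t, ht⟩)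
  · rw [kExt_of_ne _ ht, kD, Finset.sum_eq_zero]
    intro i hi
    rw [kExt_of_ne, map_zero, smul_zero]
    have := Finset.card_erase_add_one hi
    omega

/-- Contraction with the `i`-th basis vector, as a linear map lowering the degree by one. -/
noncomputable def kH (R : Type*) [CommRing R] [Module R M] (i : Fin n) (k : ℕ) :
    KoszulMod n M (k + 1) →ₗ[R] KoszulMod n M k where
  toFun f s := if h : i ∈ s.1 then 0 else
    kSign i s.1 • f ⟨insert i s.1, by rw [Finset.card_insert_of_notMem h, s.2]⟩
  map_add' f g := by
    funext s
    by_cases h : i ∈ s.1 <;> simp [h]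
  map_smul' r f := by
    funext s
    by_cases h : i ∈ s.1
    · simp [h]
    · simp only [h, dite_false, Pi.smul_apply, RingHom.id_apply]
      exact smul_comm _ _ _

lemma kExt_kH (i : Fin n) {k : ℕ} (f : KoszulMod n M (k + 1)) :
    kExt (kH R i k f) = kContr i (kExt f) := by
  funext s
  by_cases hs : s.card = k
  · have : kExt (kH R i k f) s = kH R i k f ⟨s, hs⟩ := kExt_coe _ ⟨s, hs⟩
    rw [this]
    by_cases h : i ∈ s
    · simp [kH, kContr, h]
    · simp only [kH, kContr, h, LinearMap.coe_mk, AddHom.coe_mk, dite_false, if_false]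
      exact congrArg _ (kExt_coe f ⟨insert i s, _⟩).symm
  · rw [kExt_of_ne _ hs, kContr]
    split_ifs with h
    · rfl
    · rw [kExt_of_ne, smul_zero]
      rw [Finset.card_insert_of_notMem h]
      omega

lemma koszul_homotopy (φ : Fin n → M →ₗ[R] M) (i : Fin n) {k : ℕ} (f : KoszulMod n M (k + 1))
    (t : {s : Finset (Fin n) // s.card = k + 1}) :
    koszulD φ k (kH R i k f) t + kH R i (k + 1) (koszulD φ (k + 1) f) t = φ i (f t) := by
  rw [koszulD_apply, kExt_kH, ← kExt_coe (kH R i (k + 1) _), kExt_kH, kExt_koszulD, kD_kContr,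
    kExt_coe]

lemma koszul_homotopy_zero (φ : Fin n → M →ₗ[R] M) (i : Fin n) (f : KoszulMod n M 0)
    (t : {s : Finset (Fin n) // s.card = 0}) :
    kH R i 0 (koszulD φ 0 f) t = φ i (f t) := by
  have hc : kContr i (kExt f) = 0 := by
    funext s
    rw [kContr]
    split_ifs with h
    · rfl
    · rw [kExt_of_ne, smul_zero]; · rfl
      rw [Finset.card_insert_of_notMem h]
      omega
  have := kD_kContr φ i (kExt f) t
  rw [hc] at this
  rw [← kExt_coe (kH R i 0 _), kExt_kH, kExt_koszulD, ← kExt_coe f, ← this]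
  simp [kD]

/-- A cochain of positive degree is zero as soon as all its contractions are. -/
lemma eq_zero_of_kH {k : ℕ} (f : KoszulMod n M (k + 1)) (h : ∀ i, kH R i k f = 0) : f = 0 := by
  funext t
  obtain ⟨i, hi⟩ : t.1.Nonempty := by
    rw [← Finset.card_pos, t.2]; omega
  have h1 := congrArg (fun g => kExt g (t.1.erase i)) (h i)
  simp only [kExt_kH, kContr, Finset.notMem_erase, if_false, Finset.insert_erase hi, kExt_coe] at h1
  have h2 := congrArg (fun x => kSign i (t.1.erase i) • x) h1
  simpa [smul_smul, kSign_mul_self, kExt] using h2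

end Homotopy

section Scalars

variable {A : Type*} [CommRing A] {M : Type*} [AddCommGroup M] [Module A M] {r : ℕ}

/-- The differential of the Koszul complex of scalars `z` on `M`. -/
noncomputable abbrev zD (M : Type*) [AddCommGroup M] [Module A M] (z : Fin r → A) (k : ℕ) :
    KoszulMod r M k →ₗ[A] KoszulMod r M (k + 1) :=
  koszulD (fun i => LinearMap.lsmul A M (z i)) k

lemma zD_homotopy (z : Fin r → A) (i : Fin r) {k : ℕ} (f : KoszulMod r M (k + 1)) :
    zD M z k (kH A i k f) + kH A i (k + 1) (zD M z (k + 1) f) = z i • f := by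
  funext t
  exact koszul_homotopy _ i f t

lemma zD_homotopy_zero (z : Fin r → A) (i : Fin r) (f : KoszulMod r M 0) :
    kH A i 0 (zD M z 0 f) = z i • f := by
  funext t
  exact koszul_homotopy_zero _ i f t

/-- The Koszul differential squares to zero. By Cartan's formula `D ∘ D` commutes with all
contractions, so the claim follows by induction on the degree. -/
lemma zD_zD (z : Fin r → A) (k : ℕ) (f : KoszulMod r M k) : zD M z (k + 1) (zD M z k f) = 0 := by
  induction k with
  | zero =>
    refine eq_zero_of_kH (R := A) _ fun i => ?_
    have h := zD_homotopy z i (zD M z 0 f)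
    rw [zD_homotopy_zero, map_smul] at h
    exact left_eq_add.1 h.symm
  | succ k ih =>
    refine eq_zero_of_kH (R := A) _ fun i => ?_
    have h := zD_homotopy z i (zD M z (k + 1) f)
    rw [eq_sub_of_add_eq' (zD_homotopy z i f), map_sub, ih, map_smul, sub_zero] at h
    exact left_eq_add.1 h.symm

/-! ### The filtration by powers of `q` -/

lemma mem_smul_top_pi {ι : Type*} [Finite ι] (I : Ideal A) (f : ι → M) :
    f ∈ (I • ⊤ : Submodule A (ι → M)) ↔ ∀ i, f i ∈ (I • ⊤ : Submodule A M) := by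
  classical
  cases nonempty_fintype ι
  constructor
  · intro hf i
    have h : (I • ⊤ : Submodule A (ι → M)).map (LinearMap.proj i) ≤ I • ⊤ := by
      rw [Submodule.map_smul'']
      exact Submodule.smul_mono le_rfl le_top
    exact h ⟨f, hf, rfl⟩
  · intro hf
    rw [← Finset.univ_sum_single f]
    refine Submodule.sum_mem _ fun i _ => ?_
    have h : (I • ⊤ : Submodule A M).map (LinearMap.single A (fun _ : ι => M) i) ≤ I • ⊤ := by
      rw [Submodule.map_smul'']
      exact Submodule.smul_mono le_rfl le_top
    exact h ⟨f i, hf i, rfl⟩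

lemma zD_mem (z : Fin r → A) {q : Ideal A} (hz : ∀ i, z i ∈ q) {k m : ℕ} {f : KoszulMod r M k}
    (hf : f ∈ (q ^ m • ⊤ : Submodule A (KoszulMod r M k))) :
    zD M z k f ∈ (q ^ (m + 1) • ⊤ : Submodule A (KoszulMod r M (k + 1))) := by
  rw [mem_smul_top_pi] at hf ⊢
  intro t
  refine Submodule.sum_mem _ fun i _ => ?_
  refine zsmul_mem ?_ _
  rw [pow_succ', mul_smul]
  exact Submodule.smul_mem_smul (hz i) (hf _)

variable [IsNoetherianRing A] [Module.Finite A M]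

/-- Artin-Rees, for two consecutive powers of `q`. -/
lemma pow_succ_smul_top_inf (N : Type*) [AddCommGroup N] [Module A N] [Module.Finite A N]
    (q : Ideal A) (Z : Submodule A N) :
    ∃ c : ℕ, ∀ m ≥ c, q ^ (m + 1) • ⊤ ⊓ Z = q • (q ^ m • ⊤ ⊓ Z) := by
  obtain ⟨c, hc⟩ := q.exists_pow_inf_eq_pow_smul Z
  refine ⟨c, fun m hm => ?_⟩
  rw [hc (m + 1) (by omega), hc m hm, Nat.sub_add_comm hm, pow_succ', mul_smul]

/-- Cycles in `q ^ (m + 1) K ^ (j + 1)` bound cochains in `q ^ m K ^ j` for large `m`: by Artin-Rees a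
cycle `x` of high filtration is a combination `∑ z i • y i` of cycles `y i`, and each `z i • y i` is
the boundary of a contraction of `y i`. -/
lemma exists_exact_succ (z : Fin r → A) {q : Ideal A} (hq : q = Ideal.span (Set.range z)) (j : ℕ) :
    ∃ c : ℕ, ∀ m ≥ c, ∀ x ∈ (q ^ (m + 1) • ⊤ : Submodule A (KoszulMod r M (j + 1))),
      zD M z (j + 1) x = 0 →
        ∃ y ∈ (q ^ m • ⊤ : Submodule A (KoszulMod r M j)), zD M z j y = x := by
  obtain ⟨c, hc⟩ := pow_succ_smul_top_inf (KoszulMod r M (j + 1)) q (LinearMap.ker (zD M z (j + 1)))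
  refine ⟨c, fun m hm x hx hx0 => ?_⟩
  have hx' : x ∈ q ^ (m + 1) • ⊤ ⊓ LinearMap.ker (zD M z (j + 1)) := ⟨hx, hx0⟩
  rw [hc m hm] at hx'
  suffices h : q • (q ^ m • ⊤ ⊓ LinearMap.ker (zD M z (j + 1))) ≤
      (q ^ m • ⊤ : Submodule A (KoszulMod r M j)).map (zD M z j) from h hx'
  rw [Submodule.smul_le]
  rintro a ha y ⟨hy, hy0⟩
  have h : q ≤ ((q ^ m • ⊤ : Submodule A (KoszulMod r M j)).map (zD M z j)).comap
      (LinearMap.toSpanSingleton A _ y) := by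
    refine hq.le.trans (Submodule.span_le.2 ?_)
    rintro _ ⟨i, rfl⟩
    have hh : (q ^ m • ⊤ : Submodule A (KoszulMod r M (j + 1))).map (kH A i j) ≤ q ^ m • ⊤ := by
      rw [Submodule.map_smul'']
      exact Submodule.smul_mono le_rfl le_top
    refine ⟨kH A i j y, hh ⟨y, hy, rfl⟩, ?_⟩
    have := zD_homotopy z i y
    rw [LinearMap.mem_ker.1 hy0, map_zero, add_zero] at this
    simpa using this
  exact h ha

/-- The degree-zero case of the same argument: contractions vanish there, so each `z i • y i` is
zero. -/
lemma exists_exact_zero (z : Fin r → A) {q : Ideal A} (hq : q = Ideal.span (Set.range z)) :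
    ∃ c : ℕ, ∀ m ≥ c, ∀ x ∈ (q ^ (m + 1) • ⊤ : Submodule A (KoszulMod r M 0)),
      zD M z 0 x = 0 → x = 0 := by
  obtain ⟨c, hc⟩ := pow_succ_smul_top_inf (KoszulMod r M 0) q (LinearMap.ker (zD M z 0))
  refine ⟨c, fun m hm x hx hx0 => ?_⟩
  have hx' : x ∈ q ^ (m + 1) • ⊤ ⊓ LinearMap.ker (zD M z 0) := ⟨hx, hx0⟩
  rw [hc m hm] at hx'
  suffices h : q • (q ^ m • ⊤ ⊓ LinearMap.ker (zD M z 0)) ≤ (⊥ : Submodule A _) from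
    (Submodule.mem_bot A).1 (h hx')
  rw [Submodule.smul_le]
  rintro a ha y ⟨hy, hy0⟩
  have h : q ≤ (⊥ : Submodule A _).comap (LinearMap.toSpanSingleton A _ y) := by
    rw [hq, Ideal.span, Submodule.span_le]
    rintro _ ⟨i, rfl⟩
    have := zD_homotopy_zero z i y
    rw [LinearMap.mem_ker.1 hy0, map_zero] at this
    simpa using this.symm
  exact h ha

/-- The subcomplex `q ^ (n + j) K ^ j` contributes nothing to homology for large `n`. -/
lemma exists_ker_inf_le (z : Fin r → A) {q : Ideal A} (hq : q = Ideal.span (Set.range z)) (j : ℕ) :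
    ∃ c : ℕ, ∀ n ≥ c, LinearMap.ker (zD M z j) ⊓ q ^ (n + j) • ⊤ ≤
      koszulB (fun i => LinearMap.lsmul A M (z i)) j := by
  cases j with
  | zero =>
    obtain ⟨c, hc⟩ := exists_exact_zero (M := M) z hq
    refine ⟨c + 1, fun n hn => ?_⟩
    rintro x ⟨hx0, hx⟩
    obtain ⟨m, rfl⟩ := Nat.exists_eq_add_of_le' hn
    exact (Submodule.mem_bot A).2 (hc (m + c) (by omega) x hx hx0)
  | succ j =>
    obtain ⟨c, hc⟩ := exists_exact_succ (M := M) z hq j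
    refine ⟨c, fun n hn => ?_⟩
    rintro x ⟨hx0, hx⟩
    obtain ⟨y, -, hy⟩ := hc (n + j) (by omega) x hx hx0
    exact ⟨y, hy⟩

end Scalars
/-! ### Lengths -/

section Lengths

variable {A : Type*} [CommRing A]

/-- The length count for one spot of a filtered complex: the associated short exact sequences are
`0 → Z / (Z ⊓ F) → K / F → D(K) / (D(K) ⊓ F') → 0` and
`0 → B / (B ⊓ F) → Z / (Z ⊓ F) → Z / B → 0`, where `Z` is the kernel of `D`. -/
lemma length_filtered {K K' : Type*} [AddCommGroup K] [Module A K] [AddCommGroup K'] [Module A K']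
    (D : K →ₗ[A] K') (B F : Submodule A K) (F' : Submodule A K')
    (hB : B ≤ LinearMap.ker D) (hF : F ≤ F'.comap D) (hBF : LinearMap.ker D ⊓ F ≤ B)
    (hex : ∀ x, D x ∈ F' → ∃ y ∈ F, D y = D x) :
    Module.length A (K ⧸ F) =
      Module.length A (LinearMap.ker D ⧸ B.comap (LinearMap.ker D).subtype) +
      Module.length A (B ⧸ F.comap B.subtype) +
      Module.length A (LinearMap.range D ⧸ F'.comap (LinearMap.range D).subtype) := by
  set Z := LinearMap.ker D with hZ
  have e1 : Module.length A (K ⧸ F) = Module.length A (Z ⧸ F.comap Z.subtype) +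
      Module.length A (LinearMap.range D ⧸ F'.comap (LinearMap.range D).subtype) := by
    have h1 : F ≤ (F'.comap (LinearMap.range D).subtype).comap D.rangeRestrict := fun x hx => hF hx
    refine Module.length_eq_add_of_exact
      ((F.comap Z.subtype).mapQ F Z.subtype le_rfl)
      (F.mapQ (F'.comap (LinearMap.range D).subtype) D.rangeRestrict h1) ?_ ?_ ?_
    · rw [← LinearMap.ker_eq_bot, LinearMap.ker_eq_bot']
      intro x
      obtain ⟨x, rfl⟩ := Submodule.Quotient.mk_surjective _ x
      rw [Submodule.mapQ_apply, Submodule.Quotient.mk_eq_zero, Submodule.Quotient.mk_eq_zero]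
      exact id
    · intro x
      obtain ⟨⟨_, x, rfl⟩, rfl⟩ := Submodule.Quotient.mk_surjective _ x
      exact ⟨Submodule.Quotient.mk x, rfl⟩
    · intro x
      obtain ⟨x, rfl⟩ := Submodule.Quotient.mk_surjective _ x
      rw [Submodule.mapQ_apply, Submodule.Quotient.mk_eq_zero]
      constructor
      · intro hx
        obtain ⟨y, hy, hyx⟩ := hex x hx
        refine ⟨Submodule.Quotient.mk ⟨x - y, by simp [hZ, hyx]⟩, ?_⟩
        rw [Submodule.mapQ_apply, Submodule.Quotient.eq]
        simpa using hy
      · rintro ⟨w, hw⟩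
        obtain ⟨w, rfl⟩ := Submodule.Quotient.mk_surjective _ w
        rw [Submodule.mapQ_apply, Submodule.Quotient.eq] at hw
        have h1 := hF hw
        have h2 : D w = 0 := w.2
        simpa [h2] using h1
  have e2 : Module.length A (Z ⧸ F.comap Z.subtype) = Module.length A (B ⧸ F.comap B.subtype) +
      Module.length A (Z ⧸ B.comap Z.subtype) := by
    have h1 : F.comap B.subtype ≤ (F.comap Z.subtype).comap (Submodule.inclusion hB) :=
      fun x hx => hx
    have h2 : F.comap Z.subtype ≤ B.comap Z.subtype := fun x hx => hBF ⟨x.2, hx⟩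
    refine Module.length_eq_add_of_exact
      ((F.comap B.subtype).mapQ (F.comap Z.subtype) (Submodule.inclusion hB) h1)
      (Submodule.factor h2) ?_ ?_ ?_
    · rw [← LinearMap.ker_eq_bot, LinearMap.ker_eq_bot']
      intro x
      obtain ⟨x, rfl⟩ := Submodule.Quotient.mk_surjective _ x
      rw [Submodule.mapQ_apply, Submodule.Quotient.mk_eq_zero, Submodule.Quotient.mk_eq_zero]
      exact id
    · exact Submodule.factor_surjective _
    · intro x
      obtain ⟨x, rfl⟩ := Submodule.Quotient.mk_surjective _ x
      rw [Submodule.factor, Submodule.mapQ_apply, Submodule.Quotient.mk_eq_zero]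
      constructor
      · intro hx
        exact ⟨Submodule.Quotient.mk ⟨x, hx⟩, rfl⟩
      · rintro ⟨w, hw⟩
        obtain ⟨w, rfl⟩ := Submodule.Quotient.mk_surjective _ w
        rw [Submodule.mapQ_apply, Submodule.Quotient.eq] at hw
        have h1 : (w : _) - (x : K) ∈ B := hBF ⟨Z.sub_mem (hB w.2) x.2, hw⟩
        have h2 := B.sub_mem w.2 h1
        simpa using h2
  rw [e1, e2, add_comm (Module.length A (B ⧸ F.comap B.subtype))]

variable {M : Type*} [AddCommGroup M] [Module A M]

lemma ker_compLeft_mkQ {ι : Type*} [Finite ι] (I : Ideal A) :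
    LinearMap.ker ((Submodule.mkQ (I • ⊤ : Submodule A M)).compLeft ι) = I • ⊤ := by
  ext f
  rw [mem_smul_top_pi, LinearMap.mem_ker, funext_iff]
  refine forall_congr' fun i => ?_
  simp

/-- Reduction modulo an ideal commutes with finite powers of a module. -/
noncomputable def quotPiEquiv {ι : Type*} [Finite ι] (I : Ideal A) :
    ((ι → M) ⧸ (I • ⊤ : Submodule A (ι → M))) ≃ₗ[A] (ι → M ⧸ (I • ⊤ : Submodule A M)) :=
  (Submodule.quotEquivOfEq _ _ (ker_compLeft_mkQ I).symm).trans
    (LinearMap.quotKerEquivOfSurjective ((Submodule.mkQ (I • ⊤ : Submodule A M)).compLeft ι)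
      (fun f => ⟨fun i => (f i).out, funext fun i => by simp⟩))

/-- If `M / qM` is Artinian, so is `M / q ^ n M`: the layer `q ^ n M / q ^ (n + 1) M` is a
quotient of a finite power of `M / qM`. -/
lemma isArtinian_quot_pow [IsNoetherianRing A] (q : Ideal A)
    (h : IsArtinian A (M ⧸ (q • ⊤ : Submodule A M))) (n : ℕ) :
    IsArtinian A (M ⧸ (q ^ n • ⊤ : Submodule A M)) := by
  induction n with
  | zero =>
    have : Subsingleton (M ⧸ (q ^ 0 • ⊤ : Submodule A M)) := by
      rw [Submodule.Quotient.subsingleton_iff]; simp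
    infer_instance
  | succ n ih =>
    classical
    obtain ⟨s, hs⟩ := IsNoetherian.noetherian (q ^ n)
    let ψ : (s → M) →ₗ[A] M := ∑ a : s, a.1 • LinearMap.proj a
    have hψ (f : s → M) : ψ f = ∑ a : s, a.1 • f a := by simp [ψ]
    have hrange : LinearMap.range ψ = q ^ n • ⊤ := by
      apply le_antisymm
      · rintro _ ⟨f, rfl⟩
        rw [hψ]
        refine Submodule.sum_mem _ fun a _ => Submodule.smul_mem_smul ?_ trivial
        rw [← hs]; exact Submodule.subset_span a.2
      · rw [← hs, Submodule.smul_le]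
        intro a ha y _
        have h1 : Submodule.span A (s : Set A) ≤
            (LinearMap.range ψ).comap (LinearMap.toSpanSingleton A M y) := by
          rw [Submodule.span_le]
          intro b hb
          refine ⟨Pi.single ⟨b, hb⟩ y, ?_⟩
          rw [hψ, Finset.sum_eq_single ⟨b, hb⟩]
          · simp
          · intro c _ hc
            rw [Pi.single_eq_of_ne hc, smul_zero]
          · simp
        exact h1 ha
    have hψq : (q • ⊤ : Submodule A (s → M)) ≤ (q ^ (n + 1) • ⊤ : Submodule A M).comap ψ := by
      rw [← Submodule.map_le_iff_le_comap, Submodule.map_smul'', Submodule.map_top, hrange,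
        pow_succ', mul_smul]
    have hqn : (q ^ (n + 1) • ⊤ : Submodule A M) ≤ q ^ n • ⊤ :=
      Submodule.smul_mono (Ideal.pow_le_pow_right n.le_succ) le_rfl
    have hpi : IsArtinian A ((s → M) ⧸ (q • ⊤ : Submodule A (s → M))) :=
      (quotPiEquiv q).symm.isArtinian_iff.1 inferInstance
    refine isArtinian_of_range_eq_ker (Submodule.mapQ _ _ ψ hψq) (Submodule.factor hqn) ?_
    rw [Submodule.range_mapQ, hrange, Submodule.factor, Submodule.ker_mapQ, Submodule.comap_id]

end Lengths
/-! ### Finite differences -/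

/-- If the `r`-th difference of a polynomial is eventually the constant `χ`, then the polynomial has
degree at most `r` and `χ` is `r !` times its `r`-th coefficient. -/
lemma eq_factorial_mul_coeff (P : Polynomial ℚ) (r N : ℕ) (χ : ℚ)
    (h : ∀ n ≥ N, ∑ j ∈ Finset.range (r + 1),
      (-1 : ℚ) ^ (r - j) * (r.choose j * P.eval ((n + j : ℕ) : ℚ)) = χ) :
    χ = r.factorial * P.coeff r := by
  have h' : ∀ n ≥ N, (fwdDiff (1 : ℚ))^[r] P.eval (n : ℚ) = χ := by
    intro n hn
    rw [← h n hn, fwdDiff_iter_eq_sum_shift]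
    refine Finset.sum_congr rfl fun j _ => ?_
    simp [mul_assoc]
  rcases lt_trichotomy P.natDegree r with hd | hd | hd
  · rw [Polynomial.coeff_eq_zero_of_natDegree_lt hd, mul_zero, ← h' N le_rfl,
      Polynomial.fwdDiff_iter_eq_zero_of_degree_lt hd]
    rfl
  · subst hd
    rw [← h' N le_rfl, Polynomial.fwdDiff_iter_degree_eq_factorial]
    simp [mul_comm]
  · exfalso
    have h1 := congrFun P.fwdDiff_iter_degree_eq_factorial (N : ℚ)
    obtain ⟨k, hk⟩ := Nat.exists_eq_add_of_lt hd
    have h2 : (fwdDiff (1 : ℚ))^[P.natDegree] P.eval (N : ℚ) = 0 := by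
      have h3 : (fwdDiff (1 : ℚ))^[k + 1] (fun _ : ℚ => χ) (N : ℚ) = 0 := by
        rw [Function.iterate_succ_apply, fwdDiff_const]
        simp [fwdDiff_iter_eq_sum_shift]
      rw [hk, show r + k + 1 = (k + 1) + r by omega, Function.iterate_add_apply, ← h3,
        fwdDiff_iter_eq_sum_shift, fwdDiff_iter_eq_sum_shift]
      refine Finset.sum_congr rfl fun j _ => ?_
      congr 1
      have := h' (N + j) (by omega)
      simpa using this
    rw [h2] at h1
    have hP : P ≠ 0 := by rintro rfl; simp at hd
    have : P.leadingCoeff * (P.natDegree.factorial : ℚ) ≠ 0 :=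
      mul_ne_zero (Polynomial.leadingCoeff_ne_zero.2 hP) (by positivity)
    apply this
    simpa using h1.symm

/-- The boundary terms cancel in an alternating sum. -/
lemma alternating_telescope (r : ℕ) (b : ℕ → ℚ) :
    ∑ j ∈ Finset.range (r + 1), (-1 : ℚ) ^ (r - j) * (b j + b (j + 1)) =
      b (r + 1) + (-1) ^ r * b 0 := by
  induction r with
  | zero => simp [add_comm]
  | succ r ih =>
    rw [Finset.sum_range_succ, Finset.sum_congr rfl (g := fun j =>
      (-1) * ((-1 : ℚ) ^ (r - j) * (b j + b (j + 1)))), ← Finset.mul_sum, ih]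
    · simp; ring
    · intro j hj
      rw [Nat.succ_sub (by simpa [Nat.lt_succ_iff] using hj), pow_succ]; ring

/-! ### Serre's formula -/

section Main

variable {A : Type*} [CommRing A] [IsNoetherianRing A] {M : Type*} [AddCommGroup M] [Module A M]
  [Module.Finite A M] {r : ℕ}

/-- The length of the `j`-th boundaries modulo `q ^ (n + j) K ^ j`. -/
noncomputable def bLen (M : Type*) [AddCommGroup M] [Module A M] (z : Fin r → A) (q : Ideal A)
    (n j : ℕ) : ℕ∞ :=
  Module.length A (koszulB (fun i => LinearMap.lsmul A M (z i)) j ⧸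
    (q ^ (n + j) • ⊤ : Submodule A (KoszulMod r M j)).comap (Submodule.subtype _))

/-- For large `n`, the length of `K ^ j / q ^ (n + j) K ^ j` splits into homology and boundaries. -/
lemma length_koszul (z : Fin r → A) {q : Ideal A} (hq : q = Ideal.span (Set.range z)) (j : ℕ) :
    ∃ c : ℕ, ∀ n ≥ c, (r.choose j : ℕ∞) *
        Module.length A (M ⧸ (q ^ (n + j) • ⊤ : Submodule A M)) =
      Module.length A (koszulH (fun i => LinearMap.lsmul A M (z i)) j) +
        bLen M z q n j + bLen M z q n (j + 1) := by
  obtain ⟨c₁, h₁⟩ := exists_ker_inf_le (M := M) z hq j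
  obtain ⟨c₂, h₂⟩ := exists_exact_succ (M := M) z hq j
  refine ⟨max c₁ c₂, fun n hn => ?_⟩
  have hz : ∀ i, z i ∈ q := fun i => hq ▸ Ideal.subset_span ⟨i, rfl⟩
  have hcard : ENat.card {s : Finset (Fin r) // s.card = j} = r.choose j := by
    rw [ENat.card_eq_coe_fintype_card]
    simp
  rw [← hcard, ← Module.length_pi, ← (quotPiEquiv (q ^ (n + j))).length_eq]
  refine length_filtered (zD M z j) _ _ (q ^ (n + (j + 1)) • ⊤) ?_
    (fun x hx => zD_mem z hz hx) (h₁ n (le_of_max_le_left hn)) ?_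
  · cases j with
    | zero => exact bot_le
    | succ j =>
      rintro _ ⟨x, rfl⟩
      exact zD_zD z j x
  · intro x hx
    exact h₂ (n + j) (by omega) _ hx (zD_zD z j x)

end Main
/-- Serre's formula: if `z 1, ..., z r` is a system of parameters for the finitely
generated module `M` over the Noetherian local ring `A` (i.e. `r = dim M`, `q = (z)` and
`M/qM` has finite length), then all Koszul homology modules of `(z; M)` have finite
length and their alternating sum equals the multiplicity `e_q(M)`, i.e. `r!` times the
degree-`r` coefficient of the Hilbert–Samuel polynomial of `(q, M)`.  (In the cochain
indexing used here, the degree-`j` homology is `H_{r-j}` of the chain Koszul complex,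
whence the sign `(-1)^(r-j)`.) -/
theorem stmt11 (A : Type*) [CommRing A] [IsNoetherianRing A] [IsLocalRing A]
    (M : Type*) [AddCommGroup M] [Module A M] [Module.Finite A M]
    (r : ℕ) (z : Fin r → A) (q : Ideal A) (hq : q = Ideal.span (Set.range z))
    (hr : mDim A M = (r : ℕ∞))
    (hfl : IsFiniteLength A (M ⧸ (q • ⊤ : Submodule A M))) :
    ∃ len : ℕ → ℕ,
      (∀ j, mLength A (koszulH (fun i => LinearMap.lsmul A M (z i)) j) = (len j : ℕ∞)) ∧
      ∀ P : Polynomial ℚ, IsHSPoly A q M P →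
        (∑ j ∈ Finset.range (r + 1), (-1 : ℚ) ^ (r - j) * (len j : ℚ)) =
          (r.factorial : ℚ) * P.coeff r := by
  have hart : IsArtinian A (M ⧸ (q • ⊤ : Submodule A M)) :=
    (isFiniteLength_iff_isNoetherian_isArtinian.1 hfl).2
  have hL : ∀ n, Module.length A (M ⧸ (q ^ n • ⊤ : Submodule A M)) ≠ ⊤ := fun n => by
    have := isArtinian_quot_pow q hart n
    exact Module.length_ne_top
  choose c hc using length_koszul (M := M) z hq
  have hne : ∀ j, ∀ n ≥ c j,
      Module.length A (koszulH (fun i => LinearMap.lsmul A M (z i)) j) ≠ ⊤ ∧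
      bLen M z q n j ≠ ⊤ ∧ bLen M z q n (j + 1) ≠ ⊤ := by
    intro j n hn
    have h : (r.choose j : ℕ∞) * Module.length A (M ⧸ (q ^ (n + j) • ⊤ : Submodule A M)) ≠ ⊤ :=
      WithTop.mul_ne_top (ENat.natCast_ne_top (r.choose j)) (hL (n + j))
    rw [hc j n hn] at h
    simpa [and_assoc] using h
  have hlen : ∀ j, ((Module.length A
      (koszulH (fun i => LinearMap.lsmul A M (z i)) j)).toNat : ℕ∞) =
      Module.length A (koszulH (fun i => LinearMap.lsmul A M (z i)) j) :=
    fun j => ENat.natCast_toNat (hne j _ le_rfl).1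
  refine ⟨fun j => (Module.length A (koszulH (fun i => LinearMap.lsmul A M (z i)) j)).toNat,
    fun j => ?_, ?_⟩
  · rw [hlen, mLength, Module.coe_length]
  rintro P ⟨N, hN⟩
  refine eq_factorial_mul_coeff P r (N + ∑ j ∈ Finset.range (r + 1), c j) _ fun n hn => ?_
  have hcn : ∀ j ∈ Finset.range (r + 1), c j ≤ n := fun j hj =>
    (Finset.single_le_sum (f := c) (fun _ _ => Nat.zero_le _) hj).trans (by omega)
  let b : ℕ → ℚ := fun j => (bLen M z q n j).toNat
  have hb0 : b 0 = 0 := by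
    have : bLen M z q n 0 = 0 := Module.length_eq_zero_iff.2 <|
      (Submodule.mkQ_surjective _).subsingleton (α := (⊥ : Submodule A (KoszulMod r M 0)))
    simp [b, this]
  -- there are no subsets of `Fin r` with `r + 1` elements
  have hbr : b (r + 1) = 0 := by
    have hemp : IsEmpty {s : Finset (Fin r) // s.card = r + 1} :=
      ⟨fun s => by have := s.1.card_le_univ; rw [s.2, Fintype.card_fin] at this; omega⟩
    simp [b, bLen, Module.length_eq_zero]
  have key : ∀ j ∈ Finset.range (r + 1), (r.choose j : ℚ) * P.eval ((n + j : ℕ) : ℚ) =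
      ((Module.length A (koszulH (fun i => LinearMap.lsmul A M (z i)) j)).toNat : ℚ) +
        (b j + b (j + 1)) := by
    intro j hj
    obtain ⟨d, hd, hdP⟩ := hN (n + j) (by omega)
    have hd' : Module.length A (M ⧸ (q ^ (n + j) • ⊤ : Submodule A M)) = d := by
      rw [hsVal, mLength, ← Module.coe_length] at hd
      exact_mod_cast hd
    have h := hc j n (hcn j hj)
    obtain ⟨-, h1, h2⟩ := hne j n (hcn j hj)
    rw [hd', ← hlen j, ← ENat.natCast_toNat h1, ← ENat.natCast_toNat h2] at h
    norm_cast at h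
    rw [← hdP, ← add_assoc]
    have h' := congrArg (Nat.cast : ℕ → ℚ) h
    push_cast at h'
    exact h'
  rw [Finset.sum_congr rfl fun j hj => by rw [key j hj, mul_add], Finset.sum_add_distrib,
    alternating_telescope, hb0, hbr, mul_zero, add_zero, add_zero]
end
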